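/- Let L be a ℤ-graded Lie conformal algebra of class 𝒱 such that p_{−1,1} and p_{0,1} are nonzero constants (elements of ℂ*). Then: L ≅ Cur sl(2,ℂ) if p_{1,1} = 0 and p_{−1,−1} = 0; L ≅ M(2) if p_{1,1} ≠ 0 and p_{−1,−1} ≠ 0; and L ≅ M(1) in the remaining cases (exactly one of p_{1,1}, p_{−1,−1} nonzero). -/

import Mathlib

open scoped BigOperators Classical ENNReal
open Polynomial

noncomputable section

/-- A Lie conformal algebra over `ℂ`, encoded via its `n`-th products
`a_(n) b` and the operator `∂ = D`.  The `λ`-bracket is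
`[a_λ b] = ∑ₙ (λⁿ/n!) • (a_(n) b)`. -/
structure LieConformalAlgebra (L : Type) [AddCommGroup L] [Module ℂ L] : Type where
  D : L →ₗ[ℂ] L
  prd : ℕ → L →ₗ[ℂ] L →ₗ[ℂ] L
  bound : ∀ a b : L, ∃ N : ℕ, ∀ n : ℕ, N ≤ n → prd n a b = 0
  sesq : ∀ (n : ℕ) (a b : L), prd n (D a) b = (-(n : ℂ)) • prd (n - 1) a b
  sesq' : ∀ (n : ℕ) (a b : L),
    prd n a (D b) = D (prd n a b) + (n : ℂ) • prd (n - 1) a b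
  skew : ∀ (n : ℕ) (a b : L),
    prd n a b
      = - ∑ᶠ j : ℕ, ((-1 : ℂ) ^ (n + j) * ((Nat.factorial j : ℂ))⁻¹) • (⇑D)^[j] (prd (n + j) b a)
  jacobi : ∀ (m n : ℕ) (a b c : L),
    prd m a (prd n b c) - prd n b (prd m a c)
      = ∑ j ∈ Finset.range (m + 1), (Nat.choose m j : ℂ) • prd (m + n - j) (prd j a b) c

namespace LieConformalAlgebra

variable {L : Type} [AddCommGroup L] [Module ℂ L]

/-- The action of a polynomial `q(∂) ∈ ℂ[∂]` on an element. -/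
def applyP (C : LieConformalAlgebra L) (q : Polynomial ℂ) (x : L) : L :=
  q.sum fun k c => c • (⇑C.D)^[k] x

/-- `[a_λ b] = p(∂, λ) • t`, where `p ∈ ℂ[∂][λ]` is a two-variable polynomial
(outer variable `λ`, inner variable `∂`). -/
def BracketEq (C : LieConformalAlgebra L) (a b t : L) (p : Polynomial (Polynomial ℂ)) : Prop :=
  ∀ n : ℕ, C.prd n a b = (Nat.factorial n : ℂ) • C.applyP (p.coeff n) t

def IsSubalgebra (C : LieConformalAlgebra L) (N : Submodule ℂ L) : Prop :=
  (∀ x ∈ N, C.D x ∈ N) ∧ ∀ n : ℕ, ∀ a ∈ N, ∀ b ∈ N, C.prd n a b ∈ N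

def IsIdeal (C : LieConformalAlgebra L) (N : Submodule ℂ L) : Prop :=
  (∀ x ∈ N, C.D x ∈ N) ∧ ∀ (n : ℕ) (a : L), ∀ b ∈ N, C.prd n a b ∈ N

/-- `L` is finitely generated as a Lie conformal algebra (finite type). -/
def FiniteType (C : LieConformalAlgebra L) : Prop :=
  ∃ s : Finset L, ∀ N : Submodule ℂ L, C.IsSubalgebra N → (s : Set L) ⊆ (N : Set L) → N = ⊤

/-- `L` is finitely generated as a `ℂ[∂]`-module. -/
def FGPolyModule (C : LieConformalAlgebra L) : Prop :=
  ∃ s : Finset L, ∀ N : Submodule ℂ L, (∀ x ∈ N, C.D x ∈ N) → (s : Set L) ⊆ (N : Set L) → N = ⊤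

/-- Iterated adjoint action `a₁_(k₁)(a₂_(k₂)(⋯ x))`. -/
def iterPrd (C : LieConformalAlgebra L) : List (L × ℕ) → L → L
  | [], x => x
  | (a, k) :: t, x => C.prd k a (iterPrd C t x)

/-- The `ℂ[∂]`-rank of the submodule `N` is at most `r`:
any `r+1` elements of `N` are `ℂ[∂]`-linearly dependent. -/
def polyRankLE (C : LieConformalAlgebra L) (N : Submodule ℂ L) (r : ℕ) : Prop :=
  ∀ v : Fin (r + 1) → L, (∀ k, v k ∈ N) →
    ∃ q : Fin (r + 1) → Polynomial ℂ, (∃ k, q k ≠ 0) ∧ ∑ k, C.applyP (q k) (v k) = 0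

/-- The family `v` is a free `ℂ[∂]`-basis of `L`. -/
def IsFreePolyBasis (C : LieConformalAlgebra L) {ι : Type} (v : ι → L) : Prop :=
  LinearIndependent ℂ (fun q : ι × ℕ => (⇑C.D)^[q.2] (v q.1)) ∧
  Submodule.span ℂ (Set.range fun q : ι × ℕ => (⇑C.D)^[q.2] (v q.1)) = ⊤

/-- `[U_λ V]`: the `ℂ`-span of all `u_(n) v`. -/
def bspan (C : LieConformalAlgebra L) (U V : Set L) : Submodule ℂ L :=
  Submodule.span ℂ {x : L | ∃ (n : ℕ) (u : L) (w : L), u ∈ U ∧ w ∈ V ∧ x = C.prd n u w}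

end LieConformalAlgebra

/-- `∂` as an element of `ℂ[∂][λ]`. -/
def Pd : Polynomial (Polynomial ℂ) := Polynomial.C Polynomial.X
/-- `λ` as an element of `ℂ[∂][λ]`. -/
def Pl : Polynomial (Polynomial ℂ) := Polynomial.X
/-- a constant in `ℂ[∂][λ]`. -/
def Pc (a : ℂ) : Polynomial (Polynomial ℂ) := Polynomial.C (Polynomial.C a)

/-- Total degree of a two-variable polynomial in `ℂ[∂][λ]`. -/
def tdeg (p : Polynomial (Polynomial ℂ)) : ℕ :=
  p.support.sup fun n => n + (p.coeff n).natDegree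

section ModelPolynomials

/-- structure polynomials of `𝒱(s)` -/
def pV (s : ℂ) (i j : ℤ) : Polynomial (Polynomial ℂ) :=
  Pd + Pc 2 * Pl + Pc (s * ((i : ℂ) - (j : ℂ)))

/-- structure polynomials of `CL₁(s)` -/
def pCL1 (s : ℂ) (i j : ℤ) : Polynomial (Polynomial ℂ) :=
  Pc ((i : ℂ) + 1) * Pd + Pc ((i : ℂ) + (j : ℂ) + 2) * Pl + Pc (s * ((i : ℂ) - (j : ℂ)))

/-- structure polynomials of `CL₂(b,s)` -/
def pCL2 (b s : ℂ) (i j : ℤ) : Polynomial (Polynomial ℂ) :=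
  Pc ((i : ℂ) + b) * Pd + Pc ((i : ℂ) + (j : ℂ) + 2 * b) * Pl + Pc (s * ((i : ℂ) - (j : ℂ)))

/-- structure polynomials of `SCL₂(b,s)` (for `2b ∈ ℤ`), w.r.t. the basis
`L'ᵢ = Lᵢ (i ≠ -2b)`, `L'_{-2b} = (∂+2s)L_{-2b}` of the corresponding graded
subalgebra of `CL₂(b,s)`. -/
def pSCL2 (b s : ℂ) (i j : ℤ) : Polynomial (Polynomial ℂ) :=
  (if (i : ℂ) = -(2 * b) then Pc (2 * s) - Pl else 1) *
  (if (j : ℂ) = -(2 * b) then Pd + Pl + Pc (2 * s) else 1) *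
  (if (i : ℂ) + (j : ℂ) = -(2 * b) then Pc ((i : ℂ) + b) else pCL2 b s i j)

/-- structure polynomials of `CL₃(s)` -/
def pCL3 (s : ℂ) (i j : ℤ) : Polynomial (Polynomial ℂ) :=
  if i + j = 0 then Pc (i : ℂ) * (Pd + Pc s)
  else if i = 0 then Pc (-(j : ℂ)) * (Pc (2 * s) - Pl)
  else if j = 0 then Pc (i : ℂ) * (Pd + Pl + Pc (2 * s))
  else Pc (i : ℂ) * Pd + Pc ((i : ℂ) + (j : ℂ)) * Pl + Pc (s * ((i : ℂ) - (j : ℂ)))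

/-- structure polynomials of `ECL(s)` -/
def pECL (s : ℂ) (i j : ℤ) : Polynomial (Polynomial ℂ) :=
  if i + j = 0 then Pc (i : ℂ) * (Pd + Pc s) * (Pd + Pc (2 * s))
  else if i = 0 then Pc (-(j : ℂ))
  else if j = 0 then Pc (i : ℂ)
  else Pc (i : ℂ) * Pd + Pc ((i : ℂ) + (j : ℂ)) * Pl + Pc (s * ((i : ℂ) - (j : ℂ)))

/-- structure polynomials of `M(1)` (indices `≥ -1`, completed by skew-symmetry) -/
def pM1 (i j : ℤ) : Polynomial (Polynomial ℂ) :=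
  if i = 1 ∧ j = 1 then Pd + Pc 2 * Pl
  else if i = -1 ∧ 1 ≤ j then Pc (((j : ℂ) + 1) * ((j : ℂ) - 2) / 2)
  else if j = -1 ∧ 1 ≤ i then Pc (-(((i : ℂ) + 1) * ((i : ℂ) - 2) / 2))
  else if i = 0 then Pc (-(j : ℂ))
  else if j = 0 then Pc (i : ℂ)
  else if i = 1 ∧ 2 ≤ j then 1
  else if j = 1 ∧ 2 ≤ i then -1
  else 0

/-- structure polynomials of `M(2)` (completed by skew-symmetry) -/
def pM2 (i j : ℤ) : Polynomial (Polynomial ℂ) :=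
  if i = 1 ∧ j = 1 then Pd + Pc 2 * Pl
  else if i = -1 ∧ j = -1 then Pd + Pc 2 * Pl
  else if i = 0 then Pc (-(j : ℂ))
  else if j = 0 then Pc (i : ℂ)
  else if i = -1 ∧ 1 ≤ j then Pc (((j : ℂ) + 1) * ((j : ℂ) - 2) / 2)
  else if j = -1 ∧ 1 ≤ i then Pc (-(((i : ℂ) + 1) * ((i : ℂ) - 2) / 2))
  else if i = 1 ∧ j ≤ -2 then Pc (((j : ℂ) - 1) * ((j : ℂ) + 2) / 2)
  else if j = 1 ∧ i ≤ -2 then Pc (-(((i : ℂ) - 1) * ((i : ℂ) + 2) / 2))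
  else if i = -1 ∧ j ≤ -2 then 1
  else if j = -1 ∧ i ≤ -2 then -1
  else if i = 1 ∧ 2 ≤ j then 1
  else if j = 1 ∧ 2 ≤ i then -1
  else 0

end ModelPolynomials

namespace LieConformalAlgebra

variable {L : Type} [AddCommGroup L] [Module ℂ L]

/-- `C` is isomorphic to the Virasoro Lie conformal algebra. -/
def IsVir (C : LieConformalAlgebra L) : Prop :=
  ∃ e : L, C.IsFreePolyBasis (fun _ : Unit => e) ∧ C.BracketEq e e e (Pd + Pc 2 * Pl)

/-- `C` is isomorphic to the loop Virasoro Lie conformal algebra `𝒱(s)`. -/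
def IsV (C : LieConformalAlgebra L) (s : ℂ) : Prop :=
  ∃ v : ℤ → L, C.IsFreePolyBasis v ∧
    ∀ i j : ℤ, C.BracketEq (v i) (v j) (v (i + j)) (pV s i j)

/-- `C` is isomorphic to `CL₁(s)`. -/
def IsCL1 (C : LieConformalAlgebra L) (s : ℂ) : Prop :=
  ∃ v : ℤ → L, C.IsFreePolyBasis (fun q : {i : ℤ // -1 ≤ i} => v q.1) ∧
    ∀ i j : ℤ, -1 ≤ i → -1 ≤ j →
      C.BracketEq (v i) (v j) (if -1 ≤ i + j then v (i + j) else 0) (pCL1 s i j)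

/-- `C` is isomorphic to `CL₂(b,s)`. -/
def IsCL2 (C : LieConformalAlgebra L) (b s : ℂ) : Prop :=
  ∃ v : ℤ → L, C.IsFreePolyBasis v ∧
    ∀ i j : ℤ, C.BracketEq (v i) (v j) (v (i + j)) (pCL2 b s i j)

/-- `C` is isomorphic to `SCL₂(b,s)`. -/
def IsSCL2 (C : LieConformalAlgebra L) (b s : ℂ) : Prop :=
  ∃ v : ℤ → L, C.IsFreePolyBasis v ∧
    ∀ i j : ℤ, C.BracketEq (v i) (v j) (v (i + j)) (pSCL2 b s i j)

/-- `C` is isomorphic to `CL₃(s)`. -/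
def IsCL3 (C : LieConformalAlgebra L) (s : ℂ) : Prop :=
  ∃ v : ℤ → L, C.IsFreePolyBasis v ∧
    ∀ i j : ℤ, C.BracketEq (v i) (v j) (v (i + j)) (pCL3 s i j)

/-- `C` is isomorphic to `ECL(s)`. -/
def IsECL (C : LieConformalAlgebra L) (s : ℂ) : Prop :=
  ∃ v : ℤ → L, C.IsFreePolyBasis v ∧
    ∀ i j : ℤ, C.BracketEq (v i) (v j) (v (i + j)) (pECL s i j)

/-- `C` is isomorphic to `M(1)`. -/
def IsM1 (C : LieConformalAlgebra L) : Prop :=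
  ∃ v : ℤ → L, C.IsFreePolyBasis (fun q : {i : ℤ // -1 ≤ i} => v q.1) ∧
    ∀ i j : ℤ, -1 ≤ i → -1 ≤ j →
      C.BracketEq (v i) (v j) (if -1 ≤ i + j then v (i + j) else 0) (pM1 i j)

/-- `C` is isomorphic to `M(2)`. -/
def IsM2 (C : LieConformalAlgebra L) : Prop :=
  ∃ v : ℤ → L, C.IsFreePolyBasis v ∧
    ∀ i j : ℤ, C.BracketEq (v i) (v j) (v (i + j)) (pM2 i j)

/-- `C` is isomorphic to the current Lie conformal algebra `Cur 𝔤`. -/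
def IsCur (C : LieConformalAlgebra L) (g : Type) [LieRing g] [LieAlgebra ℂ g] : Prop :=
  ∃ φ : g →ₗ[ℂ] L,
    Function.Bijective (fun f : ℕ →₀ g => f.sum fun k x => (⇑C.D)^[k] (φ x)) ∧
    (∀ x y : g, C.prd 0 (φ x) (φ y) = φ ⁅x, y⁆) ∧
    ∀ n : ℕ, 1 ≤ n → ∀ x y : g, C.prd n (φ x) (φ y) = 0

/-- `C ≅ Cur sl(2,ℂ)`. -/
def IsCurSl2 (C : LieConformalAlgebra L) : Prop :=
  C.IsCur ↥(LieAlgebra.SpecialLinear.sl (Fin 2) ℂ)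

/-- `C ≅ Cur 𝒲`, `𝒲` the Witt algebra (basis `wᵢ`, `[wᵢ,wⱼ] = (j-i)w_{i+j}`). -/
def IsCurWitt (C : LieConformalAlgebra L) : Prop :=
  ∃ v : ℤ → L, C.IsFreePolyBasis v ∧
    (∀ i j : ℤ, C.prd 0 (v i) (v j) = (((j : ℂ) - (i : ℂ))) • v (i + j)) ∧
    ∀ n : ℕ, 1 ≤ n → ∀ i j : ℤ, C.prd n (v i) (v j) = 0

/-- `C ≅ Cur 𝒲₁`, `𝒲₁` spanned by the `wᵢ`, `i ≥ -1`. -/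
def IsCurWitt1 (C : LieConformalAlgebra L) : Prop :=
  ∃ v : ℤ → L, C.IsFreePolyBasis (fun q : {i : ℤ // -1 ≤ i} => v q.1) ∧
    (∀ i j : ℤ, -1 ≤ i → -1 ≤ j →
      C.prd 0 (v i) (v j) = (((j : ℂ) - (i : ℂ))) • (if -1 ≤ i + j then v (i + j) else 0)) ∧
    ∀ n : ℕ, 1 ≤ n → ∀ i j : ℤ, -1 ≤ i → -1 ≤ j → C.prd n (v i) (v j) = 0

end LieConformalAlgebra

/-- A `ℤ`-graded Lie conformal algebra. -/
structure GradedLCA (L : Type) [AddCommGroup L] [Module ℂ L]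
    extends LieConformalAlgebra L where
  G : ℤ → Submodule ℂ L
  internal : DirectSum.IsInternal G
  dGrade : ∀ i : ℤ, ∀ x ∈ G i, D x ∈ G i
  prdGrade : ∀ (i j : ℤ) (n : ℕ), ∀ a ∈ G i, ∀ b ∈ G j, prd n a b ∈ G (i + j)

namespace GradedLCA

variable {L : Type} [AddCommGroup L] [Module ℂ L]

/-- A graded ideal: an ideal generated by homogeneous elements. -/
def IsGradedIdeal (C : GradedLCA L) (N : Submodule ℂ L) : Prop :=
  C.toLieConformalAlgebra.IsIdeal N ∧ (⨆ i : ℤ, N ⊓ C.G i) = N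

/-- `L` is simple graded: nonzero bracket, and the only graded ideals are `⊥` and `⊤`. -/
def IsSimpleGraded (C : GradedLCA L) : Prop :=
  (∃ (n : ℕ) (a b : L), C.prd n a b ≠ 0) ∧
  ∀ N : Submodule ℂ L, C.IsGradedIdeal N → N = ⊥ ∨ N = ⊤

/-- `[L_λ L] = L`. -/
def Perfect (C : GradedLCA L) : Prop :=
  Submodule.span ℂ {x : L | ∃ (n : ℕ) (a b : L), x = C.prd n a b} = ⊤

/-- Each component `L_i` is a nilpotent `L₀`-module under the adjoint action. -/
def Rootless (C : GradedLCA L) : Prop :=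
  ∀ i : ℤ, ∃ n : ℕ, 1 ≤ n ∧ ∀ l : List (L × ℕ), l.length = n →
    (∀ q ∈ l, q.1 ∈ C.G 0) → ∀ x ∈ C.G i, C.toLieConformalAlgebra.iterPrd l x = 0

/-- The ranks of the components are uniformly bounded. -/
def UniformlyBounded (C : GradedLCA L) : Prop :=
  ∃ N : ℕ, 1 ≤ N ∧ ∀ i : ℤ, C.toLieConformalAlgebra.polyRankLE (C.G i) N

end GradedLCA

/-- A module over a Lie conformal algebra, encoded via the `n`-th actions. -/
structure LCAModule {L : Type} [AddCommGroup L] [Module ℂ L] (C : LieConformalAlgebra L)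
    (M : Type) [AddCommGroup M] [Module ℂ M] : Type where
  DM : M →ₗ[ℂ] M
  act : ℕ → L →ₗ[ℂ] M →ₗ[ℂ] M
  bound : ∀ (a : L) (m : M), ∃ N : ℕ, ∀ n : ℕ, N ≤ n → act n a m = 0
  sesq : ∀ (n : ℕ) (a : L) (m : M), act n (C.D a) m = (-(n : ℂ)) • act (n - 1) a m
  sesq' : ∀ (n : ℕ) (a : L) (m : M),
    act n a (DM m) = DM (act n a m) + (n : ℂ) • act (n - 1) a m
  comm : ∀ (p q : ℕ) (a b : L) (m : M),
    act p a (act q b m) - act q b (act p a m)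
      = ∑ j ∈ Finset.range (p + 1), (Nat.choose p j : ℂ) • act (p + q - j) (C.prd j a b) m

namespace LCAModule

variable {L : Type} [AddCommGroup L] [Module ℂ L] {C : LieConformalAlgebra L}
variable {M : Type} [AddCommGroup M] [Module ℂ M]

/-- Iterated action `a₁_(k₁)(a₂_(k₂)(⋯ m))`. -/
def iterAct (ρ : LCAModule C M) : List (L × ℕ) → M → M
  | [], m => m
  | (a, k) :: t, m => ρ.act k a (iterAct ρ t m)

/-- `N` is an `L`-submodule of `M`. -/
def IsSub (ρ : LCAModule C M) (N : Submodule ℂ M) : Prop :=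
  (∀ m ∈ N, ρ.DM m ∈ N) ∧ ∀ (n : ℕ) (a : L), ∀ m ∈ N, ρ.act n a m ∈ N

/-- `M` is a nilpotent module. -/
def Nilpotent (ρ : LCAModule C M) : Prop :=
  ∃ n : ℕ, 1 ≤ n ∧ ∀ l : List (L × ℕ), l.length = n → ∀ m : M, ρ.iterAct l m = 0

/-- `M` is finitely generated as an `L`-module. -/
def FG (ρ : LCAModule C M) : Prop :=
  ∃ s : Finset M, ∀ N : Submodule ℂ M, ρ.IsSub N → (s : Set M) ⊆ (N : Set M) → N = ⊤

/-- The `L`-submodule `N` is finitely generated as an `L`-module. -/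
def FGIn (ρ : LCAModule C M) (N : Submodule ℂ M) : Prop :=
  ∃ s : Finset M, (s : Set M) ⊆ (N : Set M) ∧
    ∀ P : Submodule ℂ M, ρ.IsSub P → (s : Set M) ⊆ (P : Set M) → N ≤ P

/-- `M` is finitely generated as a `ℂ[∂]`-module. -/
def FGPoly (ρ : LCAModule C M) : Prop :=
  ∃ s : Finset M, ∀ N : Submodule ℂ M, (∀ m ∈ N, ρ.DM m ∈ N) → (s : Set M) ⊆ (N : Set M) → N = ⊤

end LCAModule

/-- A family is `ℂ[∂]`-linearly independent. -/
def polyIndep {M : Type} [AddCommGroup M] [Module ℂ M] (DM : M →ₗ[ℂ] M)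
    {r : ℕ} (v : Fin r → M) : Prop :=
  ∀ q : Fin r → Polynomial ℂ,
    (∑ k, (q k).sum fun t c => c • (⇑DM)^[t] (v k)) = 0 → ∀ k, q k = 0

/-- The `ℂ[∂]`-rank of a submodule, in `ℕ∞`. -/
def polyRank {M : Type} [AddCommGroup M] [Module ℂ M] (DM : M →ₗ[ℂ] M)
    (N : Submodule ℂ M) : ℕ∞ :=
  ⨆ r ∈ {r : ℕ | ∃ v : Fin r → M, (∀ k, v k ∈ N) ∧ polyIndep DM v}, (r : ℕ∞)

/-- A graded module over a `ℤ`-graded Lie conformal algebra. -/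
structure GradedLCAModule {L : Type} [AddCommGroup L] [Module ℂ L] (C : GradedLCA L)
    (M : Type) [AddCommGroup M] [Module ℂ M]
    extends LCAModule C.toLieConformalAlgebra M where
  GM : ℤ → Submodule ℂ M
  internal : DirectSum.IsInternal GM
  dGrade : ∀ i : ℤ, ∀ m ∈ GM i, DM m ∈ GM i
  actGrade : ∀ (i j : ℤ) (n : ℕ), ∀ a ∈ C.G i, ∀ m ∈ GM j, act n a m ∈ GM (i + j)

namespace GradedLCAModule

variable {L : Type} [AddCommGroup L] [Module ℂ L] {C : GradedLCA L}
variable {M : Type} [AddCommGroup M] [Module ℂ M]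

/-- `Mⁿ = ⊕_{|i| ≤ n} M_i`. -/
def seg (ρ : GradedLCAModule C M) (n : ℕ) : Submodule ℂ M :=
  ⨆ i : ℤ, ⨆ _ : |i| ≤ (n : ℤ), ρ.GM i

/-- `e(M) = liminf (1/n) rank_{ℂ[∂]} Mⁿ`. -/
def eM (ρ : GradedLCAModule C M) : ℝ≥0∞ :=
  Filter.atTop.liminf fun n : ℕ => (polyRank ρ.DM (ρ.seg n) : ℝ≥0∞) / (n : ℝ≥0∞)

/-- Each `M_i` is a nilpotent `L₀`-module. -/
def Weightless (ρ : GradedLCAModule C M) : Prop :=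
  ∀ i : ℤ, ∃ n : ℕ, 1 ≤ n ∧ ∀ l : List (L × ℕ), l.length = n →
    (∀ q ∈ l, q.1 ∈ C.G 0) → ∀ m ∈ ρ.GM i, ρ.toLCAModule.iterAct l m = 0

/-- The submodule `I(M)` generated by all homogeneous `v` lying in the span of
the iterated actions of `L` on `v`. -/
def IM (ρ : GradedLCAModule C M) : Submodule ℂ M :=
  sInf {N : Submodule ℂ M | ρ.toLCAModule.IsSub N ∧
    {v : M | (∃ i : ℤ, v ∈ ρ.GM i) ∧
      v ∈ Submodule.span ℂ
        {w : M | ∃ l : List (L × ℕ), 1 ≤ l.length ∧ w = ρ.toLCAModule.iterAct l v}} ⊆ N}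

end GradedLCAModule

/-- The structure context for graded Lie conformal algebras all of whose
nonzero components are free of rank one over `ℂ[∂]`: fixed homogeneous bases
`bas i` and structure polynomials `sp i j ∈ ℂ[∂][λ]`, with `0 ∈ Supp(L)` and
`L₀` abelian. -/
structure RankOneContext (L : Type) [AddCommGroup L] [Module ℂ L]
    extends GradedLCA L where
  bas : ℤ → L
  sp : ℤ → ℤ → Polynomial (Polynomial ℂ)
  bas_mem : ∀ i : ℤ, bas i ∈ G i
  bas_zero : ∀ i : ℤ, G i = ⊥ → bas i = 0
  bas_indep : ∀ i : ℤ, G i ≠ ⊥ → LinearIndependent ℂ fun k : ℕ => (⇑D)^[k] (bas i)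
  bas_span : ∀ i : ℤ, G i ≠ ⊥ →
    G i = Submodule.span ℂ (Set.range fun k : ℕ => (⇑D)^[k] (bas i))
  sp_brkt : ∀ (i j : ℤ) (n : ℕ),
    prd n (bas i) (bas j)
      = (Nat.factorial n : ℂ) • (((sp i j).coeff n).sum fun k c => c • (⇑D)^[k] (bas (i + j)))
  sp_zero : ∀ i j : ℤ, (G i = ⊥ ∨ G j = ⊥ ∨ G (i + j) = ⊥) → sp i j = 0
  supp_zero : G 0 ≠ ⊥
  abelian0 : ∀ n : ℕ, ∀ x ∈ G 0, ∀ y ∈ G 0, prd n x y = 0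

/-- A Lie conformal algebra of class `𝒱`. -/
structure ClassV (L : Type) [AddCommGroup L] [Module ℂ L]
    extends RankOneContext L where
  supp_one : G 1 ≠ ⊥
  supp_negone : G (-1) ≠ ⊥
  genV : ∀ N : Submodule ℂ L, (∀ x ∈ N, D x ∈ N) →
    (∀ n : ℕ, ∀ a ∈ N, ∀ b ∈ N, prd n a b ∈ N) →
    G 1 ≤ N → G 0 ≤ N → G (-1) ≤ N → N = ⊤
  ne_m11 : sp (-1) 1 ≠ 0
  ne_01 : sp 0 1 ≠ 0

/-!
Constancy of `p_{-1,1}` and `p_{0,1}` makes the actions of `L₁` and `L₋₁` on `L₀` commute, which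
determines `[L₋₁_λ L₀]`; after rescaling, `L₁, L₀, L₋₁` become elements `E, H, F` with the constant
brackets of `sl(2,ℂ)`. Comparing `H`-weights, `[E_λ E]` has degree at most `1` in `λ`, so by
skew-symmetry it is `(∂ + 2λ) w₀` for some `w₀`. If `w₀ ≠ 0`, then along the ladder `w₀`,
`w₁ = [E_λ w₀]`, `w₂ = [E_λ w₁]`, … one has `[F_λ w_{k+1}] = ((k + 4)(k + 1) / 2) w_k`; these
coefficients never vanish, so `w_k` generates `L_{k+2}`. The same holds for `F` and the negative
degrees. As a ladder may also be identically zero, one multiplication table, that of `M(2)`, covers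
all three cases.
-/

namespace LieConformalAlgebra

variable {L : Type} [AddCommGroup L] [Module ℂ L] {C : LieConformalAlgebra L}
  {a b x y z : L} {m n N : ℕ} {p q : ℂ[X]}

/-! ### Constant brackets -/

/-- `[a_λ b] = x`, with no dependence on `λ`. -/
def ConstBracket (C : LieConformalAlgebra L) (a b x : L) : Prop :=
  C.prd 0 a b = x ∧ ∀ n, C.prd (n + 1) a b = 0

theorem constBracket_zero_iff : C.ConstBracket a b 0 ↔ ∀ n, C.prd n a b = 0 :=
  ⟨fun h n => n.casesOn h.1 h.2, fun h => ⟨h 0, fun n => h (n + 1)⟩⟩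

namespace ConstBracket

theorem smul_left (h : C.ConstBracket a b x) (c : ℂ) : C.ConstBracket (c • a) b (c • x) :=
  ⟨by simp [h.1], fun n => by simp [h.2]⟩

theorem smul_right (h : C.ConstBracket a b x) (c : ℂ) : C.ConstBracket a (c • b) (c • x) :=
  ⟨by simp [h.1], fun n => by simp [h.2]⟩

theorem neg_left (h : C.ConstBracket a b x) : C.ConstBracket (-a) b (-x) := by
  simpa using h.smul_left (-1)

theorem symm (h : C.ConstBracket a b x) : C.ConstBracket b a (-x) := by
  have term_eq_zero (n j : ℕ) (hnj : n + j ≠ 0) :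
      ((-1 : ℂ) ^ (n + j) * (j.factorial : ℂ)⁻¹) • (⇑C.D)^[j] (C.prd (n + j) a b) = 0 := by
    obtain ⟨k, hk⟩ := Nat.exists_eq_succ_of_ne_zero hnj
    rw [hk, h.2 k, ← Module.End.pow_apply, map_zero, smul_zero]
  constructor
  · rw [C.skew, finsum_eq_single _ 0 fun j hj => term_eq_zero 0 j (by simpa using hj)]
    simp [h.1]
  · intro n
    rw [C.skew, finsum_eq_zero_of_forall_eq_zero fun j => term_eq_zero (n + 1) j (by lia), neg_zero]

theorem prd_prd (h : C.ConstBracket a b x) (m n : ℕ) (y : L) :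
    C.prd m a (C.prd n b y) = C.prd n b (C.prd m a y) + C.prd (m + n) x y := by
  have jacobi := C.jacobi m n a b y
  rw [Finset.sum_range_succ', Finset.sum_eq_zero fun j _ => by simp [h.2 j]] at jacobi
  rw [← sub_eq_iff_eq_add', jacobi]
  simp [h.1]

end ConstBracket

theorem prd_prd_zero_left (C : LieConformalAlgebra L) (n : ℕ) (a b x : L) :
    C.prd n (C.prd 0 a b) x = C.prd 0 a (C.prd n b x) - C.prd n b (C.prd 0 a x) := by
  simp [C.jacobi 0 n a b x]

/-! ### The `ℂ[∂]`-module structure -/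

theorem applyP_eq_aeval (C : LieConformalAlgebra L) (q : ℂ[X]) (x : L) :
    C.applyP q x = aeval C.D q x := by
  simp [applyP, aeval_eq_sum_range, sum_over_range, Module.End.pow_apply]

theorem applyP_zero (C : LieConformalAlgebra L) (x : L) : C.applyP 0 x = 0 := by
  simp [applyP_eq_aeval]

theorem applyP_C (C : LieConformalAlgebra L) (c : ℂ) (x : L) :
    C.applyP (Polynomial.C c) x = c • x := by
  simp [applyP_eq_aeval]

theorem applyP_add (C : LieConformalAlgebra L) (p q : ℂ[X]) (x : L) :
    C.applyP (p + q) x = C.applyP p x + C.applyP q x := by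
  simp [applyP_eq_aeval]

theorem applyP_smul (C : LieConformalAlgebra L) (q : ℂ[X]) (c : ℂ) (x : L) :
    C.applyP q (c • x) = c • C.applyP q x := by
  simp [applyP_eq_aeval]

theorem applyP_mul_X (C : LieConformalAlgebra L) (q : ℂ[X]) (x : L) :
    C.applyP (q * X) x = C.D (C.applyP q x) := by
  simp [applyP_eq_aeval, mul_comm q]

/-- The `ℂ[∂]`-submodule of `L` generated by `s`. -/
def polySpan (C : LieConformalAlgebra L) (s : Set L) : Submodule ℂ L :=
  Submodule.span ℂ {x | ∃ y ∈ s, ∃ k : ℕ, (⇑C.D)^[k] y = x}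

theorem subset_polySpan (C : LieConformalAlgebra L) (s : Set L) : s ⊆ C.polySpan s :=
  fun y hy => Submodule.subset_span ⟨y, hy, 0, rfl⟩

theorem polySpan_le {s : Set L} {N : Submodule ℂ L} (hD : ∀ x ∈ N, C.D x ∈ N) (hs : s ⊆ N) :
    C.polySpan s ≤ N := by
  refine Submodule.span_le.2 ?_
  rintro _ ⟨y, hy, k, rfl⟩
  exact Set.MapsTo.iterate hD k (hs hy)

theorem D_mem_polySpan {s : Set L} (hx : x ∈ C.polySpan s) : C.D x ∈ C.polySpan s := by
  suffices C.polySpan s ≤ (C.polySpan s).comap C.D from this hx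
  refine Submodule.span_le.2 ?_
  rintro _ ⟨y, hy, k, rfl⟩
  exact Submodule.subset_span ⟨y, hy, k + 1, Function.iterate_succ_apply' _ _ _⟩

theorem polySpan_range {ι : Type} (C : LieConformalAlgebra L) (v : ι → L) :
    C.polySpan (Set.range v) =
      Submodule.span ℂ (Set.range fun q : ι × ℕ => (⇑C.D)^[q.2] (v q.1)) := by
  refine congrArg (Submodule.span ℂ) (Set.ext fun x => ?_)
  simp

theorem applyP_mem {N : Submodule ℂ L} (hD : ∀ x ∈ N, C.D x ∈ N) (hx : x ∈ N) (q : ℂ[X]) :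
    C.applyP q x ∈ N :=
  N.sum_mem fun k _ => N.smul_mem _ (Set.MapsTo.iterate hD k hx)

theorem mem_polySpan_singleton : x ∈ C.polySpan {b} ↔ ∃ q, C.applyP q b = x := by
  constructor
  · intro hx
    induction hx using Submodule.span_induction with
    | mem x h =>
      obtain ⟨_, rfl, k, rfl⟩ := h
      exact ⟨X ^ k, by simp [applyP_eq_aeval, Module.End.pow_apply]⟩
    | zero => exact ⟨0, C.applyP_zero b⟩
    | add _ _ _ _ hp hq =>
      obtain ⟨p, rfl⟩ := hp
      obtain ⟨q, rfl⟩ := hq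
      exact ⟨p + q, C.applyP_add p q b⟩
    | smul c _ _ hq =>
      obtain ⟨q, rfl⟩ := hq
      exact ⟨c • q, by simp [applyP_eq_aeval]⟩
  · rintro ⟨q, rfl⟩
    exact applyP_mem (fun x hx => D_mem_polySpan hx)
      (C.subset_polySpan _ (Set.mem_singleton b)) q

theorem mem_polySpan_of_mem_orbit (hx : x ∈ MulAction.orbit ℂˣ b) : x ∈ C.polySpan {b} := by
  obtain ⟨u, rfl⟩ := hx
  exact Submodule.smul_mem _ _ (C.subset_polySpan _ rfl)

theorem prd_mem_of_mem_polySpan {s t : Set L} {N : Submodule ℂ L} (hD : ∀ x ∈ N, C.D x ∈ N)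
    (hst : ∀ n, ∀ a ∈ s, ∀ b ∈ t, C.prd n a b ∈ N)
    (hx : x ∈ C.polySpan s) (hy : y ∈ C.polySpan t) (n : ℕ) : C.prd n x y ∈ N := by
  have right (a) (ha : a ∈ s) : C.polySpan t ≤ ⨅ n, N.comap (C.prd n a) := by
    refine polySpan_le (fun y hy => ?_) fun b hb => by simpa using fun n => hst n a ha b hb
    simp only [Submodule.mem_iInf, Submodule.mem_comap, C.sesq'] at hy ⊢
    exact fun n => N.add_mem (hD _ (hy n)) (N.smul_mem _ (hy (n - 1)))
  have left : C.polySpan s ≤ ⨅ n, N.comap ((C.prd n).flip y) := by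
    refine polySpan_le (fun x hx => ?_) fun a ha => ?_
    · simp only [Submodule.mem_iInf, Submodule.mem_comap, LinearMap.flip_apply, C.sesq] at hx ⊢
      exact fun n => N.smul_mem _ (hx (n - 1))
    · simpa using right a ha hy
  simpa using (Submodule.mem_iInf _).1 (left hx) n

/-! ### Brackets given by structure polynomials -/

theorem bracketEq_Pc_iff {t : L} {c : ℂ} :
    C.BracketEq a b t (Pc c) ↔ C.ConstBracket a b (c • t) := by
  constructor
  · intro h
    exact ⟨by simp [h 0, Pc, applyP_C],
      fun n => by simp [h (n + 1), Pc, applyP_zero]⟩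
  · rintro ⟨h0, hs⟩ (_ | n)
    · simp [h0, Pc, applyP_C]
    · simp [hs n, Pc, applyP_zero]

theorem bracketEq_zero_iff {t : L} : C.BracketEq a b t 0 ↔ C.ConstBracket a b 0 := by
  simpa [Pc] using bracketEq_Pc_iff (C := C) (a := a) (b := b) (t := t) (c := 0)

theorem BracketEq.symm {t : L} {c : ℂ} (h : C.BracketEq a b t (Pc c)) :
    C.BracketEq b a t (Pc (-c)) := by
  simpa only [bracketEq_Pc_iff, neg_smul] using (bracketEq_Pc_iff.1 h).symm

theorem bracketEq_Pd_add_two_Pl_iff {t : L} :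
    C.BracketEq a b t (Pd + Pc 2 * Pl) ↔
      C.prd 0 a b = C.D t ∧ C.prd 1 a b = (2 : ℂ) • t ∧ ∀ n, C.prd (n + 2) a b = 0 := by
  have applyP_X : C.applyP X t = C.D t := by simp [applyP_eq_aeval]
  have coeff (n : ℕ) : (Pd + Pc 2 * Pl).coeff (n + 2) = 0 := by simp [Pd, Pc, Pl]
  constructor
  · intro h
    exact ⟨by simp [h 0, Pd, Pc, Pl, applyP_X], by simp [h 1, Pd, Pc, Pl, applyP_C],
      fun n => by rw [h, coeff, applyP_zero, smul_zero]⟩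
  · rintro ⟨h0, h1, h2⟩ (_ | _ | n)
    · simp [h0, Pd, Pc, Pl, applyP_X]
    · simp [h1, Pd, Pc, Pl, applyP_C]
    · rw [h2, coeff, applyP_zero, smul_zero]

/-! ### The order of locality -/

/-- The order of locality of `(a, b)`: one more than the degree in `λ` of `[a_λ b]`, and `0` if
`[a_λ b] = 0`. -/
def locality (C : LieConformalAlgebra L) (a b : L) : ℕ := Nat.find (C.bound a b)

theorem prd_eq_zero_of_locality_le (h : C.locality a b ≤ n) : C.prd n a b = 0 :=
  Nat.find_spec (C.bound a b) n h

theorem locality_eq_zero_iff : C.locality a b = 0 ↔ C.ConstBracket a b 0 := by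
  simp [locality, constBracket_zero_iff]

theorem locality_eq_succ_iff :
    C.locality a b = N + 1 ↔ C.prd N a b ≠ 0 ∧ ∀ n, N < n → C.prd n a b = 0 := by
  rw [locality, Nat.find_eq_iff]
  constructor
  · rintro ⟨above, least⟩
    refine ⟨fun hN => least N N.lt_succ_self fun n hn => ?_, above⟩
    exact hn.eq_or_lt.elim (fun h => h ▸ hN) (above n)
  · rintro ⟨hN, above⟩
    exact ⟨above, fun m hm h => hN (h N (Nat.lt_succ_iff.1 hm))⟩

theorem locality_D (h : C.locality a b ≠ 0) : C.locality a (C.D b) = C.locality a b + 1 := by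
  obtain ⟨N, hN⟩ := Nat.exists_eq_succ_of_ne_zero h
  obtain ⟨ne, above⟩ := locality_eq_succ_iff.1 hN
  rw [hN, Nat.succ_eq_add_one, locality_eq_succ_iff, C.sesq', above (N + 1) N.lt_succ_self]
  refine ⟨by simpa [Nat.cast_add_one_ne_zero N] using ne, fun n hn => ?_⟩
  rw [C.sesq', above n (by lia), above (n - 1) (by lia)]
  simp

theorem locality_smul {c : ℂ} (hc : c ≠ 0) : C.locality a (c • b) = C.locality a b := by
  simp [locality, hc]

theorem locality_add_smul (h : C.locality a b < C.locality a y) (c : ℂ) :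
    C.locality a (y + c • b) = C.locality a y := by
  obtain ⟨N, hN⟩ := Nat.exists_eq_succ_of_ne_zero (Nat.ne_zero_of_lt h)
  obtain ⟨ne, above⟩ := locality_eq_succ_iff.1 hN
  have vanish (n) (hn : N ≤ n) : C.prd n a b = 0 :=
    prd_eq_zero_of_locality_le (by lia)
  rw [hN, Nat.succ_eq_add_one, locality_eq_succ_iff]
  refine ⟨by simpa [vanish N le_rfl] using ne, fun n hn => ?_⟩
  simp [vanish n hn.le, above n hn]

theorem locality_applyP (h : C.locality a b ≠ 0) (hq : q ≠ 0) :
    C.locality a (C.applyP q b) = C.locality a b + q.natDegree := by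
  induction q using Polynomial.recOnHorner with
  | M0 => exact absurd rfl hq
  | MC p c hp hc ih =>
    rw [applyP_add, applyP_C, natDegree_add_C]
    rcases eq_or_ne p 0 with rfl | hp0
    · simp [applyP_eq_aeval, locality_smul hc]
    · have hdeg : p.natDegree ≠ 0 := fun h0 => hp0 <| by
        rw [eq_C_of_natDegree_eq_zero h0, hp, map_zero]
      rw [locality_add_smul (by rw [ih hp0]; lia), ih hp0]
  | MX p hp ih =>
    rw [applyP_mul_X, locality_D (by rw [ih hp]; lia), ih hp, natDegree_mul_X hp, add_assoc]

theorem eq_zero_of_mem_polySpan_singleton (hx : x ∈ C.polySpan {b}) (hb : ¬C.ConstBracket a b 0)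
    (h : C.ConstBracket a x 0) : x = 0 := by
  obtain ⟨q, rfl⟩ := mem_polySpan_singleton.1 hx
  rw [← locality_eq_zero_iff] at hb h
  by_contra! hne
  have hq : q ≠ 0 := by
    rintro rfl
    exact hne (C.applyP_zero b)
  rw [locality_applyP hb hq] at h
  lia

theorem ConstBracket.mem_orbit (h : C.ConstBracket a x z) (hz : z ≠ 0)
    (hx : x ∈ C.polySpan {b}) : x ∈ MulAction.orbit ℂˣ b := by
  have hx1 : C.locality a x = 0 + 1 := locality_eq_succ_iff.2
    ⟨h.1.trans_ne hz, fun n hn => by simpa [Nat.sub_add_cancel hn] using h.2 (n - 1)⟩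
  obtain ⟨q, rfl⟩ := mem_polySpan_singleton.1 hx
  have hb : C.locality a b ≠ 0 := fun hb => by
    have hzero := prd_mem_of_mem_polySpan (C := C) (s := {a}) (t := {b}) (N := ⊥) (by simp)
      (by simpa [← constBracket_zero_iff] using locality_eq_zero_iff.1 hb)
      (C.subset_polySpan _ rfl) hx 0
    exact hz (h.1 ▸ hzero)
  have hq : q ≠ 0 := by
    rintro rfl
    exact hz (by simpa [applyP_zero] using h.1.symm)
  rw [locality_applyP hb hq] at hx1
  obtain ⟨c, rfl⟩ := natDegree_eq_zero.1 (show q.natDegree = 0 by lia)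
  exact ⟨Units.mk0 c (by simpa using hq), (C.applyP_C c b).symm⟩

theorem ConstBracket.prd_applyP (h : C.ConstBracket a y z) (q : ℂ[X]) (n : ℕ) :
    C.prd n a (C.applyP q y) = C.applyP (derivative^[n] q) z := by
  induction q using Polynomial.recOnHorner generalizing n with
  | M0 => simp [applyP_zero]
  | MC p c _ _ ih =>
    rw [applyP_add, map_add, ih, iterate_map_add, applyP_add, applyP_C, map_smul]
    rcases n with _ | n
    · simp [h.1, applyP_C]
    · simp [h.2 n, applyP_zero]
  | MX p _ ih =>
    rw [applyP_mul_X, C.sesq', ih, ih, iterate_derivative_mul_X, applyP_add, applyP_mul_X]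
    simp [applyP_eq_aeval, Nat.cast_smul_eq_nsmul]

theorem ConstBracket.prd_one_prd_one {c : ℂ} (h : C.ConstBracket a b (c • b))
    (hx : x ∈ C.polySpan {b}) : C.prd 1 a (C.prd 1 a x) = c • C.prd 2 a x := by
  obtain ⟨q, rfl⟩ := mem_polySpan_singleton.1 hx
  have prd_applyP (p : ℂ[X]) (n : ℕ) :
      C.prd n a (C.applyP p b) = c • C.applyP (derivative^[n] p) b := by
    rw [h.prd_applyP, applyP_smul]
  simp [prd_applyP]

end LieConformalAlgebra

namespace LieConformalAlgebra

variable {L : Type} [AddCommGroup L] [Module ℂ L] {C : LieConformalAlgebra L}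
  {E H F a b x z : L} {c : ℂ} {w w' : ℕ → L}

/-! ### `sl₂`-triples and the bracket `[E_λ E]` -/

/-- Elements with the constant brackets of `sl(2,ℂ)`, normalised as the `L₁`, `L₀`, `L₋₁` of
`M(1)` and `M(2)`. -/
structure Sl2Triple (C : LieConformalAlgebra L) (E H F : L) : Prop where
  HE : C.ConstBracket H E (-E)
  HF : C.ConstBracket H F F
  FE : C.ConstBracket F E (-H)
  HH : C.ConstBracket H H 0

theorem two_smul_prd_zero_self (h : ∀ n, C.prd (n + 2) a a = 0) :
    (2 : ℂ) • C.prd 0 a a = C.D (C.prd 1 a a) := by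
  have skew := C.skew 0 a a
  rw [finsum_eq_sum_of_support_subset (s := Finset.range 2)] at skew
  · rw [two_smul, ← sub_eq_zero]
    nth_rewrite 2 [skew]
    simp [Finset.sum_range_succ]
  · intro j hj
    contrapose! hj
    have two_le : 2 ≤ j := by simpa [Nat.lt_iff_add_one_le] using hj
    obtain ⟨k, rfl⟩ := Nat.exists_eq_add_of_le' two_le
    simp [h]

theorem prd_one_self_ne_zero (hne : ¬C.ConstBracket a a 0) (h : ∀ n, C.prd (n + 2) a a = 0) :
    C.prd 1 a a ≠ 0 := by
  intro h1
  have h0 := two_smul_prd_zero_self h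
  rw [h1, map_zero, smul_eq_zero_iff_right two_ne_zero] at h0
  refine hne ⟨h0, fun n => ?_⟩
  exact n.casesOn h1 h

namespace Sl2Triple

theorem flip (t : C.Sl2Triple E H F) : C.Sl2Triple F (-H) E where
  HE := t.HF.neg_left
  HF := by simpa using t.HE.neg_left
  FE := by simpa using t.FE.symm
  HH := by simpa [constBracket_zero_iff] using constBracket_zero_iff.1 t.HH

theorem prd_zero_prd_E_E (t : C.Sl2Triple E H F) (n : ℕ) :
    C.prd 0 H (C.prd n E E) = (-2 : ℂ) • C.prd n E E := by
  rw [t.HE.prd_prd, t.HE.1]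
  simp
  module

theorem prd_succ_prd_E_E (t : C.Sl2Triple E H F) (m n : ℕ) :
    C.prd (m + 1) H (C.prd n E E) = -C.prd (m + 1 + n) E E := by
  rw [t.HE.prd_prd, t.HE.2]
  simp

theorem constBracket_H_prd_E_E (t : C.Sl2Triple E H F) {N : ℕ}
    (hN : ∀ n, N < n → C.prd n E E = 0) :
    C.ConstBracket H (C.prd N E E) ((-2 : ℂ) • C.prd N E E) :=
  ⟨t.prd_zero_prd_E_E N, fun m => by rw [t.prd_succ_prd_E_E, hN _ (by lia), neg_zero]⟩

theorem constBracket_F_prd_one_E_E (t : C.Sl2Triple E H F) :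
    C.ConstBracket F (C.prd 1 E E) 0 := by
  rw [constBracket_zero_iff]
  rintro (_ | n)
  · have hHE : C.prd 1 H E = 0 := t.HE.2 0
    have hEH : C.prd 1 E H = 0 := t.HE.symm.2 0
    rw [t.FE.prd_prd, t.FE.1]
    simp [hHE, hEH]
  · have hHE : C.prd (n + 1 + 1) H E = 0 := t.HE.2 (n + 1)
    rw [t.FE.prd_prd, t.FE.2]
    simp [hHE]

theorem locality_E_E_le_two (t : C.Sl2Triple E H F) (hb : ∀ n, C.prd n E E ∈ C.polySpan {b}) :
    C.locality E E ≤ 2 := by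
  by_contra! hlt
  obtain ⟨M, hM⟩ := Nat.exists_eq_add_of_le' (Nat.succ_le_of_lt hlt)
  obtain ⟨ne, above⟩ := locality_eq_succ_iff.1 (show C.locality E E = M + 2 + 1 from hM)
  have top := t.constBracket_H_prd_E_E above
  obtain ⟨u, hu : u • b = C.prd (M + 2) E E⟩ :=
    top.mem_orbit (smul_ne_zero (by norm_num) ne) (hb _)
  have hHb : C.ConstBracket H b ((-2 : ℂ) • b) := by
    have hHb := top.smul_right ((u⁻¹ : ℂˣ) : ℂ)
    rwa [smul_comm, ← Units.smul_def, ← hu, inv_smul_smul] at hHb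
  -- Applied to `E_(M) E`, this reads `x = 2 x` for the leading coefficient `x = E_(M+2) E`.
  have key := hHb.prd_one_prd_one (hb M)
  rw [t.prd_succ_prd_E_E 0, t.prd_succ_prd_E_E 1, map_neg, t.prd_succ_prd_E_E 0, neg_neg,
    show 0 + 1 + (0 + 1 + M) = M + 2 by lia, show 1 + 1 + M = M + 2 by lia, neg_smul_neg,
    two_smul, left_eq_add] at key
  exact ne key

end Sl2Triple

/-! ### Climbing the ladder `x, [E_λ x], [E_λ [E_λ x]], …` -/

/-- `x` has `H`-weight `-m`, and `[F_λ x] = z` with `[E_λ z] = c x`. These are the data from which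
the action of the triple on `[E_λ x]` is computed. -/
structure Rung (C : LieConformalAlgebra L) (E H F : L) (m c : ℂ) (x z : L) : Prop where
  Hx : C.ConstBracket H x (-m • x)
  Fx : C.ConstBracket F x z
  Ez : C.ConstBracket E z (c • x)

namespace Rung

variable {m : ℂ}

theorem constBracket_F (R : C.Rung E H F m c x z) (t : C.Sl2Triple E H F) :
    C.ConstBracket F (C.prd 0 E x) ((c + m) • x) := by
  constructor
  · rw [t.FE.prd_prd, R.Fx.1, R.Ez.1, map_neg, LinearMap.neg_apply, add_zero, R.Hx.1]
    module
  · intro n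
    rw [t.FE.prd_prd, R.Fx.2, map_neg, LinearMap.neg_apply, add_zero, R.Hx.2]
    simp

theorem constBracket_F_prd_succ (R : C.Rung E H F m c x z) (t : C.Sl2Triple E H F) (n : ℕ) :
    C.ConstBracket F (C.prd (n + 1) E x) 0 := by
  rw [constBracket_zero_iff]
  intro k
  rw [t.FE.prd_prd, map_neg, LinearMap.neg_apply, ← add_assoc, R.Hx.2]
  rcases k with _ | k
  · rw [R.Fx.1, R.Ez.2, neg_zero, add_zero]
  · rw [R.Fx.2, map_zero, neg_zero, add_zero]

theorem prd_ne_zero (R : C.Rung E H F m c x z) (t : C.Sl2Triple E H F) (hx : x ≠ 0)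
    (hcm : c + m ≠ 0) : C.prd 0 E x ≠ 0 := by
  intro h0
  have hF := (R.constBracket_F t).1
  rw [h0, map_zero] at hF
  exact smul_ne_zero hcm hx hF.symm

theorem prd_mem_orbit (R : C.Rung E H F m c x z) (t : C.Sl2Triple E H F) (hx : x ≠ 0)
    (hcm : c + m ≠ 0) (hb : C.prd 0 E x ∈ C.polySpan {b}) :
    C.prd 0 E x ∈ MulAction.orbit ℂˣ b :=
  (R.constBracket_F t).mem_orbit (smul_ne_zero hcm hx) hb

theorem constBracket_E (R : C.Rung E H F m c x z) (t : C.Sl2Triple E H F) (hx : x ≠ 0)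
    (hcm : c + m ≠ 0) (hb : ∀ n, C.prd n E x ∈ C.polySpan {b}) :
    C.ConstBracket E x (C.prd 0 E x) := by
  obtain ⟨u, hu : u • b = _⟩ := R.prd_mem_orbit t hx hcm (hb 0)
  have hFb : ¬C.ConstBracket F b 0 := fun hFb => smul_ne_zero hcm hx <| by
    rw [← (R.constBracket_F t).1, ← hu, Units.smul_def, map_smul, hFb.1, smul_zero]
  exact ⟨rfl, fun n =>
    eq_zero_of_mem_polySpan_singleton (hb _) hFb (R.constBracket_F_prd_succ t n)⟩

theorem next (R : C.Rung E H F m c x z) (t : C.Sl2Triple E H F)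
    (hE : C.ConstBracket E x (C.prd 0 E x)) :
    C.Rung E H F (m + 1) (c + m) (C.prd 0 E x) ((c + m) • x) where
  Hx := by
    constructor
    · rw [t.HE.prd_prd, R.Hx.1, map_neg, LinearMap.neg_apply, add_zero, map_smul]
      module
    · intro n
      rw [t.HE.prd_prd, R.Hx.2, map_neg, LinearMap.neg_apply, add_zero, hE.2]
      simp
  Fx := R.constBracket_F t
  Ez := hE.smul_right _

end Rung

/-! ### Tails -/

/-- `w k` behaves with respect to the triple `E`, `H`, `F` as the basis element `L_{k+2}` of `M(1)`
does with respect to `L₁`, `L₀`, `L₋₁`. -/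
structure IsTail (C : LieConformalAlgebra L) (E H F : L) (w : ℕ → L) : Prop where
  EE : C.BracketEq E E (w 0) (Pd + Pc 2 * Pl)
  Ew : ∀ k, C.ConstBracket E (w k) (w (k + 1))
  Hw : ∀ k : ℕ, C.ConstBracket H (w k) (-((k : ℂ) + 2) • w k)
  Fw_zero : C.ConstBracket F (w 0) 0
  Fw_succ : ∀ k : ℕ, C.ConstBracket F (w (k + 1)) ((((k : ℂ) + 4) * (k + 1) / 2) • w k)

theorem Sl2Triple.rung_half_prd_one (t : C.Sl2Triple E H F) (h : C.locality E E ≤ 2) :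
    C.Rung E H F 2 0 ((1 / 2 : ℂ) • C.prd 1 E E) 0 where
  Hx := by
    have hH := (t.constBracket_H_prd_E_E (N := 1) fun n hn =>
      prd_eq_zero_of_locality_le (h.trans hn)).smul_right (1 / 2)
    rwa [smul_comm] at hH
  Fx := by simpa using t.constBracket_F_prd_one_E_E.smul_right (1 / 2)
  Ez := by
    rw [zero_smul, constBracket_zero_iff]
    simp

/-- The candidate for a tail: `½ E_(1) E` and its successive images under `E_(0)`. -/
def tailSeq (C : LieConformalAlgebra L) (E : L) (k : ℕ) : L :=
  (C.prd 0 E)^[k] ((1 / 2 : ℂ) • C.prd 1 E E)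

theorem tailSeq_succ (C : LieConformalAlgebra L) (E : L) (k : ℕ) :
    C.tailSeq E (k + 1) = C.prd 0 E (C.tailSeq E k) :=
  Function.iterate_succ_apply' _ _ _

section TailSeq

variable {e : ℕ → L}

theorem ladder_coeff_add (k : ℕ) :
    ((k : ℂ) + 3) * k / 2 + (k + 2) = (k + 4) * (k + 1) / 2 := by
  ring

theorem ladder_coeff_add_ne_zero (k : ℕ) : ((k : ℂ) + 3) * k / 2 + (k + 2) ≠ 0 := by
  rw [ladder_coeff_add]
  exact div_ne_zero (mul_ne_zero (by norm_cast) (by norm_cast)) two_ne_zero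

theorem Sl2Triple.rung_tailSeq (t : C.Sl2Triple E H F) (hloc : C.locality E E ≤ 2)
    (hne : C.prd 1 E E ≠ 0) (hEE : C.prd 1 E E ∈ C.polySpan {e 0})
    (hEe : ∀ k n, ∀ x ∈ C.polySpan {e k}, C.prd n E x ∈ C.polySpan {e (k + 1)}) (k : ℕ) :
    C.tailSeq E k ≠ 0 ∧ C.tailSeq E k ∈ MulAction.orbit ℂˣ (e k) ∧
      ∃ z, C.Rung E H F (k + 2) ((k + 3) * k / 2) (C.tailSeq E k) z := by
  induction k with
  | zero =>
    have R := t.rung_half_prd_one hloc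
    have hw : (1 / 2 : ℂ) • C.prd 1 E E ≠ 0 := smul_ne_zero (by norm_num) hne
    refine ⟨hw, ?_, 0, by simpa [tailSeq] using R⟩
    exact R.Hx.mem_orbit (smul_ne_zero (by norm_num) hw) (Submodule.smul_mem _ _ hEE)
  | succ k ih =>
    obtain ⟨hw, horb, z, R⟩ := ih
    have hc := ladder_coeff_add_ne_zero k
    have he (n) := hEe k n _ (mem_polySpan_of_mem_orbit horb)
    rw [tailSeq_succ]
    refine ⟨R.prd_ne_zero t hw hc, R.prd_mem_orbit t hw hc (he 0),
      (((k : ℂ) + 3) * k / 2 + (k + 2)) • C.tailSeq E k, ?_⟩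
    convert R.next t (R.constBracket_E t hw hc he) using 1
    all_goals push_cast; ring

theorem Sl2Triple.exists_isTail (t : C.Sl2Triple E H F) (hne : ¬C.ConstBracket E E 0)
    (hEE : ∀ n, C.prd n E E ∈ C.polySpan {e 0})
    (hEe : ∀ k n, ∀ x ∈ C.polySpan {e k}, C.prd n E x ∈ C.polySpan {e (k + 1)}) :
    ∃ w, C.IsTail E H F w ∧ ∀ k, w k ≠ 0 ∧ w k ∈ MulAction.orbit ℂˣ (e k) := by
  have hloc := t.locality_E_E_le_two hEE
  have hEE2 (n : ℕ) : C.prd (n + 2) E E = 0 :=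
    prd_eq_zero_of_locality_le (hloc.trans (Nat.le_add_left 2 n))
  have ladder := t.rung_tailSeq hloc (prd_one_self_ne_zero hne hEE2) (hEE 1) hEe
  refine ⟨C.tailSeq E, ⟨bracketEq_Pd_add_two_Pl_iff.2 ⟨?_, ?_, hEE2⟩, fun k => ?_, fun k => ?_,
    (t.rung_half_prd_one hloc).Fx, fun k => ?_⟩, fun k => ⟨(ladder k).1, (ladder k).2.1⟩⟩
  · simp [tailSeq, ← two_smul_prd_zero_self hEE2]
  · simp [tailSeq]
  all_goals obtain ⟨hw, horb, z, R⟩ := ladder k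
  · rw [tailSeq_succ]
    exact R.constBracket_E t hw (ladder_coeff_add_ne_zero k) fun n =>
      hEe k n _ (mem_polySpan_of_mem_orbit horb)
  · exact R.Hx
  · rw [tailSeq_succ, ← ladder_coeff_add]
    exact R.constBracket_F t

end TailSeq

theorem BracketEq.constBracket_zero {y y' : L} (hEE : C.BracketEq E E x (Pd + Pc 2 * Pl))
    (h : C.ConstBracket E z y) (h' : C.ConstBracket E y y') : C.ConstBracket x z 0 := by
  obtain ⟨EE0, EE1, EE2⟩ := bracketEq_Pd_add_two_Pl_iff.1 hEE
  rw [constBracket_zero_iff]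
  intro k
  have jacobi := C.jacobi (k + 1) 0 E E z
  rw [h.1, h.2, h'.2, Finset.sum_range_succ', Finset.sum_range_succ',
    Finset.sum_eq_zero fun j _ => by simp [EE2]] at jacobi
  have hk : ((k + 1 : ℕ) : ℂ) • C.prd k x z = 0 := by
    simp only [zero_add, EE0, EE1, C.sesq, map_zero, sub_zero, Nat.choose_one_right, add_zero,
      Nat.add_sub_cancel, map_smul, LinearMap.smul_apply, Nat.choose_zero_right, Nat.cast_one,
      one_smul, Nat.sub_zero] at jacobi
    rw [jacobi]
    module
  exact (smul_eq_zero.1 hk).resolve_left (Nat.cast_ne_zero.2 k.succ_ne_zero)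

namespace IsTail

theorem constBracket_tail (T : C.IsTail E H F w) (i j : ℕ) : C.ConstBracket (w i) (w j) 0 := by
  induction i generalizing j with
  | zero => exact T.EE.constBracket_zero (T.Ew j) (T.Ew (j + 1))
  | succ i ih =>
    rw [constBracket_zero_iff]
    intro n
    rw [← (T.Ew i).1, C.prd_prd_zero_left, (T.Ew j).1, constBracket_zero_iff.1 (ih j),
      constBracket_zero_iff.1 (ih (j + 1)), map_zero, sub_zero]

theorem constBracket_tail_flip (T : C.IsTail E H F w) (T' : C.IsTail F (-H) E w') (i j : ℕ) :
    C.ConstBracket (w i) (w' j) 0 := by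
  induction i generalizing j with
  | zero =>
    rcases j with _ | _ | j
    · exact T.EE.constBracket_zero T'.Fw_zero (by simpa using T'.Fw_zero.smul_right 0)
    · exact T.EE.constBracket_zero (T'.Fw_succ 0) (T'.Fw_zero.smul_right _)
    · exact T.EE.constBracket_zero (T'.Fw_succ (j + 1)) ((T'.Fw_succ j).smul_right _)
  | succ i ih =>
    have hE : ∃ k : ℕ, ∃ c : ℂ, C.prd 0 E (w' j) = c • w' k := by
      cases j with
      | zero => exact ⟨0, 0, by rw [T'.Fw_zero.1, zero_smul]⟩
      | succ j => exact ⟨j, _, (T'.Fw_succ j).1⟩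
    obtain ⟨k, c, hkc⟩ := hE
    rw [constBracket_zero_iff]
    intro n
    rw [← (T.Ew i).1, C.prd_prd_zero_left, hkc, map_smul, constBracket_zero_iff.1 (ih j),
      constBracket_zero_iff.1 (ih k), map_zero, smul_zero, sub_zero]

end IsTail

end LieConformalAlgebra

/-! ### The structure polynomials of `M(1)` and `M(2)` -/

section StructurePolynomials

variable {i j : ℤ}

theorem eq_of_abs_lt_two (hi : |i| < 2) : i = -1 ∨ i = 0 ∨ i = 1 := by
  grind

theorem exists_eq_of_two_le_abs (hi : 2 ≤ |i|) : ∃ k : ℕ, i = k + 2 ∨ i = -(k + 2) :=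
  ⟨(|i| - 2).toNat, by grind⟩

theorem eq_or_le_neg_two_or_two_le (i : ℤ) :
    (i = -1 ∨ i = 0 ∨ i = 1) ∨ i ≤ -2 ∨ 2 ≤ i := by
  lia

theorem Pc_zero : Pc 0 = 0 := by simp [Pc]

theorem Pc_one : Pc 1 = 1 := by simp [Pc]

theorem Pc_neg (c : ℂ) : Pc (-c) = -Pc c := by simp [Pc]

theorem pM2_zero_left (j : ℤ) : pM2 0 j = Pc (-j) := by
  simp [pM2]

theorem pM2_neg_one_one : pM2 (-1) 1 = Pc (-1) := by
  norm_num [pM2]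

theorem pM2_one_left_of_two_le (hj : 2 ≤ j) : pM2 1 j = Pc 1 := by
  grind [pM2, Pc_one]

theorem pM2_one_left_of_le_neg_two (hj : j ≤ -2) :
    pM2 1 j = Pc (((j : ℂ) - 1) * (j + 2) / 2) := by
  grind [pM2]

theorem pM2_neg_one_left (hj : 2 ≤ |j|) : pM2 (-1) j = pM2 1 (-j) := by
  rcases le_abs.1 hj with hj | hj
  · have hcoeff : (((-j : ℤ) : ℂ) - 1) * ((-j : ℤ) + 2) / 2 = (j + 1) * (j - 2) / 2 := by
      push_cast
      ring
    rw [pM2_one_left_of_le_neg_two (by lia), hcoeff]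
    grind [pM2]
  · rw [pM2_one_left_of_two_le hj]
    grind [pM2, Pc_one]

theorem pM2_eq_zero (hi : 2 ≤ |i|) (hj : 2 ≤ |j|) : pM2 i j = 0 := by
  have hi' : i ≠ -1 ∧ i ≠ 0 ∧ i ≠ 1 := by grind
  have hj' : j ≠ -1 ∧ j ≠ 0 ∧ j ≠ 1 := by grind
  simp [pM2, hi', hj']

theorem exists_pM2_eq_Pc (hij : i ≠ j) : ∃ c, pM2 i j = Pc c := by
  have Pc_neg_one : Pc (-1) = -1 := by rw [Pc_neg, Pc_one]
  by_contra!
  rcases eq_or_le_neg_two_or_two_le i with (rfl | rfl | rfl) | hi | hi <;>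
  rcases eq_or_le_neg_two_or_two_le j with (rfl | rfl | rfl) | hj | hj <;>
  grind [pM2, Pc_zero, Pc_one]

theorem pM2_swap (hij : i ≠ j) : pM2 j i = -pM2 i j := by
  rcases eq_or_le_neg_two_or_two_le i with (rfl | rfl | rfl) | hi | hi <;>
  rcases eq_or_le_neg_two_or_two_le j with (rfl | rfl | rfl) | hj | hj <;>
  grind [pM2, Pc_neg]

theorem pM1_eq_pM2 (hi : -1 ≤ i) (hj : -1 ≤ j) (hij : i ≠ -1 ∨ j ≠ -1) : pM1 i j = pM2 i j := by
  rcases eq_or_le_neg_two_or_two_le i with (rfl | rfl | rfl) | hi | hi <;>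
  rcases eq_or_le_neg_two_or_two_le j with (rfl | rfl | rfl) | hj | hj <;>
  grind [pM1, pM2]

end StructurePolynomials

namespace LieConformalAlgebra

/-! ### The multiplication table of a triple and its tails -/

/-- The family indexed by `ℤ` with `E`, `H`, `F` in degrees `1`, `0`, `-1`, with `w k` in degree
`k + 2` and with `w' k` in degree `-(k + 2)`. -/
def gradedFamily {α : Type*} (E H F : α) (w w' : ℕ → α) : ℤ → α
  | .ofNat 0 => H
  | .ofNat 1 => E
  | .ofNat (k + 2) => w k
  | .negSucc 0 => F
  | .negSucc (k + 1) => w' k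

section GradedFamily

variable {α : Type*} {E H F : α} {w w' : ℕ → α}

theorem gradedFamily_zero : gradedFamily E H F w w' 0 = H := rfl

theorem gradedFamily_one : gradedFamily E H F w w' 1 = E := rfl

theorem gradedFamily_neg_one : gradedFamily E H F w w' (-1) = F := rfl

theorem gradedFamily_natCast_add_two (k : ℕ) : gradedFamily E H F w w' (k + 2) = w k := rfl

theorem gradedFamily_neg_natCast_add_two (k : ℕ) : gradedFamily E H F w w' (-(k + 2)) = w' k := by
  rw [show -((k : ℤ) + 2) = .negSucc (k + 1) by lia]
  rfl

theorem gradedFamily_neg {H' : α} {i : ℤ} (hi : i ≠ 0) :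
    gradedFamily E H F w w' (-i) = gradedFamily F H' E w' w i := by
  rcases lt_or_ge |i| 2 with h | h
  · obtain rfl | rfl | rfl := eq_of_abs_lt_two h
    · rfl
    · exact absurd rfl hi
    · rfl
  · obtain ⟨k, rfl | rfl⟩ := exists_eq_of_two_le_abs h
    · rw [gradedFamily_natCast_add_two, gradedFamily_neg_natCast_add_two]
    · rw [neg_neg, gradedFamily_natCast_add_two, gradedFamily_neg_natCast_add_two]

end GradedFamily

variable {L : Type} [AddCommGroup L] [Module ℂ L] {C : LieConformalAlgebra L}
  {E H F a b : L} {w w' : ℕ → L} {i j : ℤ}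

theorem BracketEq.pM2_swap {t : L} (hij : i ≠ j) (h : C.BracketEq a b t (pM2 i j)) :
    C.BracketEq b a t (pM2 j i) := by
  obtain ⟨c, hc⟩ := exists_pM2_eq_Pc hij
  rw [_root_.pM2_swap hij, hc, ← Pc_neg]
  rw [hc] at h
  exact h.symm

theorem bracketEq_zero_right_iff {p : ℂ[X][X]} : C.BracketEq a b 0 p ↔ C.ConstBracket a b 0 := by
  simp [BracketEq, constBracket_zero_iff, applyP_eq_aeval]

namespace IsTail

theorem zero (h : C.ConstBracket E E 0) : C.IsTail E H F 0 where
  EE := bracketEq_zero_right_iff.2 h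
  Ew _ := by simp [constBracket_zero_iff]
  Hw _ := by simp [constBracket_zero_iff]
  Fw_zero := by simp [constBracket_zero_iff]
  Fw_succ _ := by simp [constBracket_zero_iff]

theorem bracketEq_E_gradedFamily (T : C.IsTail E H F w) (T' : C.IsTail F (-H) E w')
    (hj : 2 ≤ |j|) :
    C.BracketEq E (gradedFamily E H F w w' j) (gradedFamily E H F w w' (1 + j)) (pM2 1 j) := by
  rcases le_abs.1 hj with hj | hj
  · obtain ⟨k, rfl⟩ : ∃ k : ℕ, j = k + 2 := ⟨(j - 2).toNat, by lia⟩
    rw [pM2_one_left_of_two_le hj, bracketEq_Pc_iff, one_smul, gradedFamily_natCast_add_two,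
      show 1 + ((k : ℤ) + 2) = (k + 1 : ℕ) + 2 by lia, gradedFamily_natCast_add_two]
    exact T.Ew k
  · obtain ⟨k, rfl⟩ : ∃ k : ℕ, j = -(k + 2) := ⟨(-j - 2).toNat, by lia⟩
    rw [pM2_one_left_of_le_neg_two (by lia), bracketEq_Pc_iff, gradedFamily_neg_natCast_add_two]
    rcases k with _ | k
    · simpa using T'.Fw_zero
    · rw [show 1 + -(((k + 1 : ℕ) : ℤ) + 2) = -(k + 2) by lia, gradedFamily_neg_natCast_add_two]
      convert T'.Fw_succ k using 2
      push_cast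
      ring

theorem bracketEq_F_gradedFamily (T : C.IsTail E H F w) (T' : C.IsTail F (-H) E w')
    (hj : 2 ≤ |j|) :
    C.BracketEq F (gradedFamily E H F w w' j) (gradedFamily E H F w w' (-1 + j)) (pM2 (-1) j) := by
  have h := T'.bracketEq_E_gradedFamily (j := -j) (by rwa [neg_neg]) (by rwa [abs_neg])
  rwa [← pM2_neg_one_left hj, gradedFamily_neg (H' := H) (by grind),
    show 1 + -j = -(-1 + j) by ring, gradedFamily_neg (H' := H) (by grind)] at h

theorem constBracket_gradedFamily_zero (T : C.IsTail E H F w) (T' : C.IsTail F (-H) E w')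
    (hi : 2 ≤ |i|) (hj : 2 ≤ |j|) :
    C.ConstBracket (gradedFamily E H F w w' i) (gradedFamily E H F w w' j) 0 := by
  obtain ⟨k, rfl | rfl⟩ := exists_eq_of_two_le_abs hi <;>
    obtain ⟨l, rfl | rfl⟩ := exists_eq_of_two_le_abs hj <;>
    simp only [gradedFamily_natCast_add_two, gradedFamily_neg_natCast_add_two]
  · exact T.constBracket_tail k l
  · exact T.constBracket_tail_flip T' k l
  · simpa using (T.constBracket_tail_flip T' l k).symm
  · exact T'.constBracket_tail k l

end IsTail

namespace Sl2Triple

theorem constBracket_H_gradedFamily (t : C.Sl2Triple E H F) (T : C.IsTail E H F w)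
    (T' : C.IsTail F (-H) E w') (j : ℤ) :
    C.ConstBracket H (gradedFamily E H F w w' j) (-(j : ℂ) • gradedFamily E H F w w' j) := by
  rcases lt_or_ge |j| 2 with h | h
  · obtain rfl | rfl | rfl := eq_of_abs_lt_two h
    · simpa [gradedFamily_neg_one] using t.HF
    · simpa [gradedFamily_zero] using t.HH
    · simpa [gradedFamily_one] using t.HE
  · obtain ⟨k, rfl | rfl⟩ := exists_eq_of_two_le_abs h
    · simpa only [gradedFamily_natCast_add_two, Int.cast_add, Int.cast_natCast, Int.cast_ofNat]
        using T.Hw k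
    · rw [gradedFamily_neg_natCast_add_two]
      simpa [-neg_add_rev] using (T'.Hw k).neg_left

theorem bracketEq_gradedFamily_of_abs_lt_two (t : C.Sl2Triple E H F) (T : C.IsTail E H F w)
    (T' : C.IsTail F (-H) E w') (hi : |i| < 2) :
    C.BracketEq (gradedFamily E H F w w' i) (gradedFamily E H F w w' j)
      (gradedFamily E H F w w' (i + j)) (pM2 i j) := by
  have H_left (j : ℤ) : C.BracketEq H (gradedFamily E H F w w' j)
      (gradedFamily E H F w w' (0 + j)) (pM2 0 j) := by
    rw [pM2_zero_left, bracketEq_Pc_iff, zero_add]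
    exact t.constBracket_H_gradedFamily T T' j
  have F_E : C.BracketEq F E H (pM2 (-1) 1) := by
    simpa [pM2_neg_one_one, bracketEq_Pc_iff] using t.FE
  obtain rfl | rfl | rfl := eq_of_abs_lt_two hi
  · rcases lt_or_ge |j| 2 with hj | hj
    · obtain rfl | rfl | rfl := eq_of_abs_lt_two hj
      · exact T'.EE
      · exact (H_left (-1)).pM2_swap (by lia)
      · exact F_E
    · exact T.bracketEq_F_gradedFamily T' hj
  · exact H_left j
  · rcases lt_or_ge |j| 2 with hj | hj
    · obtain rfl | rfl | rfl := eq_of_abs_lt_two hj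
      · exact F_E.pM2_swap (by lia)
      · exact (H_left 1).pM2_swap (by lia)
      · exact T.EE
    · exact T.bracketEq_E_gradedFamily T' hj

theorem bracketEq_gradedFamily (t : C.Sl2Triple E H F) (T : C.IsTail E H F w)
    (T' : C.IsTail F (-H) E w') (i j : ℤ) :
    C.BracketEq (gradedFamily E H F w w' i) (gradedFamily E H F w w' j)
      (gradedFamily E H F w w' (i + j)) (pM2 i j) := by
  rcases lt_or_ge |i| 2 with hi | hi
  · exact t.bracketEq_gradedFamily_of_abs_lt_two T T' hi
  · rcases lt_or_ge |j| 2 with hj | hj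
    · rw [add_comm]
      exact (t.bracketEq_gradedFamily_of_abs_lt_two T T' hj).pM2_swap (by grind)
    · rw [pM2_eq_zero hi hj, bracketEq_zero_iff]
      exact T.constBracket_gradedFamily_zero T' hi hj

end Sl2Triple

end LieConformalAlgebra

/-! ### Homogeneous generators -/

namespace LieConformalAlgebra

variable {L : Type} [AddCommGroup L] [Module ℂ L] {C : LieConformalAlgebra L} {a b t : L}
  {E H F x : L} {c d : ℂ}

theorem BracketEq.prd_mem {N : Submodule ℂ L} {p : ℂ[X][X]} (h : C.BracketEq a b t p)
    (hD : ∀ x ∈ N, C.D x ∈ N) (ht : t ∈ N) (n : ℕ) : C.prd n a b ∈ N := by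
  rw [h n]
  exact N.smul_mem _ (applyP_mem hD ht _)

/-- As `[x_λ H] = 0`, the actions of `E` and `F` commute on `H`, so `E` kills `[F_λ H] - c F`. -/
theorem ConstBracket.of_commute (hFE : C.ConstBracket F E x) (hx : C.ConstBracket x H 0)
    (hHE : C.ConstBracket H E (c • E)) (hmem : ∀ n, C.prd n F H ∈ C.polySpan {F})
    (hEF : ¬C.ConstBracket E F 0) : C.ConstBracket F H (c • F) := by
  have commute (m n : ℕ) : C.prd n E (C.prd m F H) = C.prd m F (C.prd n E H) := by
    rw [hFE.prd_prd, constBracket_zero_iff.1 hx, add_zero]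
  have hEH := hHE.symm
  constructor
  · rw [← sub_eq_zero]
    refine eq_zero_of_mem_polySpan_singleton
      (sub_mem (hmem 0) (Submodule.smul_mem _ _ (C.subset_polySpan _ rfl))) hEF ⟨?_, fun n => ?_⟩
    · rw [map_sub, commute, hEH.1, map_neg, map_smul, map_smul, hFE.1, hFE.symm.1]
      module
    · rw [map_sub, commute, hEH.2, map_smul, hFE.symm.2]
      simp
  · intro m
    refine eq_zero_of_mem_polySpan_singleton (hmem _) hEF (constBracket_zero_iff.2 fun n => ?_)
    rw [commute]
    cases n with
    | zero => rw [hEH.1, map_neg, map_smul, hFE.2, smul_zero, neg_zero]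
    | succ n => rw [hEH.2, map_zero]

theorem Sl2Triple.of_rescale (hc : c ≠ 0) (hd : d ≠ 0) (hFE : C.ConstBracket F E (d • H))
    (hHE : C.ConstBracket H E (c • E)) (hFH : C.ConstBracket F H (c • F))
    (hHH : C.ConstBracket H H 0) : C.Sl2Triple E ((-c⁻¹) • H) ((d⁻¹ * c⁻¹) • F) where
  HE := by
    simpa [smul_smul, hc] using hHE.smul_left (-c⁻¹)
  HF := by
    convert (hFH.symm.smul_left (-c⁻¹)).smul_right (d⁻¹ * c⁻¹) using 1
    simp [hc]
  FE := by
    convert hFE.smul_left (d⁻¹ * c⁻¹) using 1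
    rw [← neg_smul, neg_neg, smul_smul]
    congr 1
    field_simp
  HH := by
    simpa using (hHH.smul_left (-c⁻¹)).smul_right (-c⁻¹)

end LieConformalAlgebra

namespace RankOneContext

open LieConformalAlgebra

variable {L : Type} [AddCommGroup L] [Module ℂ L] {C : RankOneContext L} {i ε : ℤ} {x E H F : L}

theorem G_le_polySpan_bas (C : RankOneContext L) (i : ℤ) : C.G i ≤ C.polySpan {C.bas i} := by
  by_cases h : C.G i = ⊥
  · simp [h]
  · rw [C.bas_span i h, Submodule.span_le]
    rintro _ ⟨k, rfl⟩
    exact Submodule.subset_span ⟨_, rfl, k, rfl⟩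

theorem polySpan_bas (C : RankOneContext L) (i : ℤ) : C.polySpan {C.bas i} = C.G i :=
  (polySpan_le (C.dGrade i) (Set.singleton_subset_iff.2 (C.bas_mem i))).antisymm
    (C.G_le_polySpan_bas i)

theorem bas_ne_zero (hi : C.G i ≠ ⊥) : C.bas i ≠ 0 :=
  (C.bas_indep i hi).ne_zero 0

theorem applyP_bas_eq_zero_iff {q : ℂ[X]} (hi : C.G i ≠ ⊥) :
    C.applyP q (C.bas i) = 0 ↔ q = 0 := by
  refine ⟨fun h => ?_, fun h => by rw [h, applyP_zero]⟩
  have coeff_eq_zero := linearIndependent_iff'.1 (C.bas_indep i hi) q.support q.coeff h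
  ext k
  by_contra! hk
  exact hk (coeff_eq_zero k (mem_support_iff.2 hk))

theorem sp_eq_zero_iff {i j : ℤ} : C.sp i j = 0 ↔ C.ConstBracket (C.bas i) (C.bas j) 0 := by
  have sp_brkt : C.BracketEq (C.bas i) (C.bas j) (C.bas (i + j)) (C.sp i j) := C.sp_brkt i j
  refine ⟨fun h => bracketEq_zero_iff.1 (h ▸ sp_brkt), fun h => ?_⟩
  by_cases hij : C.G (i + j) = ⊥
  · exact C.sp_zero i j (.inr (.inr hij))
  · ext1 n
    rw [coeff_zero, ← applyP_bas_eq_zero_iff hij]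
    simpa [constBracket_zero_iff.1 h, Nat.factorial_ne_zero] using (sp_brkt n).symm

/-- `x` is a nonzero scalar multiple of the chosen basis of the nonzero component `L_i`. -/
def IsGenerator (C : RankOneContext L) (i : ℤ) (x : L) : Prop :=
  x ≠ 0 ∧ x ∈ MulAction.orbit ℂˣ (C.bas i)

theorem isGenerator_bas (hi : C.G i ≠ ⊥) : C.IsGenerator i (C.bas i) :=
  ⟨bas_ne_zero hi, MulAction.mem_orbit_self _⟩

namespace IsGenerator

theorem smul (h : C.IsGenerator i x) {c : ℂ} (hc : c ≠ 0) : C.IsGenerator i (c • x) :=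
  ⟨smul_ne_zero hc h.1, MulAction.mem_orbit_of_mem_orbit (Units.mk0 c hc) h.2⟩

theorem mem (h : C.IsGenerator i x) : x ∈ C.G i := by
  obtain ⟨u, rfl⟩ := h.2
  exact Submodule.smul_mem _ _ (C.bas_mem i)

theorem G_ne_bot (h : C.IsGenerator i x) : C.G i ≠ ⊥ :=
  fun hi => h.1 (by simpa [hi] using h.mem)

theorem iterate_D_eq (h : C.IsGenerator i x) :
    ∃ u : ℂˣ, (fun k : ℕ => (⇑C.D)^[k] x) = fun k : ℕ => u • (⇑C.D)^[k] (C.bas i) := by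
  obtain ⟨u, rfl⟩ := h.2
  refine ⟨u, funext fun k => ?_⟩
  simp [Units.smul_def, ← Module.End.pow_apply]

theorem linearIndependent (h : C.IsGenerator i x) :
    LinearIndependent ℂ fun k : ℕ => (⇑C.D)^[k] x := by
  obtain ⟨u, hu⟩ := h.iterate_D_eq
  rw [hu]
  exact (C.bas_indep i h.G_ne_bot).units_smul fun _ => u

theorem G_le_polySpan (h : C.IsGenerator i x) : C.G i ≤ C.polySpan {x} := by
  refine (C.G_le_polySpan_bas i).trans (polySpan_le (fun _ => D_mem_polySpan) ?_)
  rw [Set.singleton_subset_iff]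
  exact mem_polySpan_of_mem_orbit (MulAction.orbit_eq_iff.2 h.2 ▸ MulAction.mem_orbit_self _)

theorem sp_self_eq_zero_iff (h : C.IsGenerator i x) : C.sp i i = 0 ↔ C.ConstBracket x x 0 := by
  obtain ⟨u, rfl⟩ := h.2
  simp [sp_eq_zero_iff, constBracket_zero_iff, Units.smul_def]

end IsGenerator

/-- An `sl₂`-triple generating the components of degrees `ε`, `0`, `-ε`, where `ε = ±1`. -/
structure GradedTriple (C : RankOneContext L) (ε : ℤ) (E H F : L) : Prop
    extends C.Sl2Triple E H F where
  isUnit : IsUnit ε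
  isGenerator_E : C.IsGenerator ε E
  isGenerator_H : C.IsGenerator 0 H
  isGenerator_F : C.IsGenerator (-ε) F

namespace GradedTriple

theorem flip (t : C.GradedTriple ε E H F) : C.GradedTriple (-ε) F (-H) E where
  toSl2Triple := t.toSl2Triple.flip
  isUnit := t.isUnit.neg
  isGenerator_E := t.isGenerator_F
  isGenerator_H := by simpa using t.isGenerator_H.smul (c := -1) (by norm_num)
  isGenerator_F := by simpa using t.isGenerator_E

theorem exists_isTail (t : C.GradedTriple ε E H F) (h : C.sp ε ε ≠ 0) :
    ∃ w, C.IsTail E H F w ∧ ∀ k : ℕ, C.IsGenerator (ε * (k + 2)) (w k) := by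
  refine t.toSl2Triple.exists_isTail (e := fun k => C.bas (ε * (k + 2)))
    (mt t.isGenerator_E.sp_self_eq_zero_iff.2 h) (fun n => ?_) fun k n x hx => ?_
  · rw [polySpan_bas]
    convert C.prdGrade ε ε n _ t.isGenerator_E.mem _ t.isGenerator_E.mem using 2
    push_cast
    ring
  · rw [polySpan_bas] at hx ⊢
    convert C.prdGrade ε _ n _ t.isGenerator_E.mem _ hx using 2
    push_cast
    ring

theorem isTail_zero (t : C.GradedTriple ε E H F) (h : C.sp ε ε = 0) : C.IsTail E H F 0 :=
  .zero (t.isGenerator_E.sp_self_eq_zero_iff.1 h)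

variable {w w' : ℕ → L}

theorem isGenerator_gradedFamily (t : C.GradedTriple ε E H F)
    (hw : 2 ≤ i → ∀ k : ℕ, C.IsGenerator (ε * (k + 2)) (w k))
    (hw' : i ≤ -2 → ∀ k : ℕ, C.IsGenerator (-ε * (k + 2)) (w' k)) :
    C.IsGenerator (ε * i) (gradedFamily E H F w w' i) := by
  rcases lt_or_ge |i| 2 with hi | hi
  · obtain rfl | rfl | rfl := eq_of_abs_lt_two hi
    · simpa [gradedFamily_neg_one] using t.isGenerator_F
    · simpa [gradedFamily_zero] using t.isGenerator_H
    · simpa [gradedFamily_one] using t.isGenerator_E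
  · obtain ⟨k, rfl | rfl⟩ := exists_eq_of_two_le_abs hi
    · exact hw (by lia) k
    · rw [gradedFamily_neg_natCast_add_two, mul_neg, ← neg_mul]
      exact hw' (by lia) k

end GradedTriple

theorem exists_gradedTriple (C : RankOneContext L) (hG : C.G 1 ≠ ⊥) (hG' : C.G (-1) ≠ ⊥)
    (h₁ : ∃ a : ℂ, a ≠ 0 ∧ C.sp (-1) 1 = Pc a) (h₀ : ∃ a : ℂ, a ≠ 0 ∧ C.sp 0 1 = Pc a) :
    ∃ H F, C.GradedTriple 1 (C.bas 1) H F := by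
  obtain ⟨d, hd, h₁⟩ := h₁
  obtain ⟨c, hc, h₀⟩ := h₀
  have hFE : C.ConstBracket (C.bas (-1)) (C.bas 1) (d • C.bas 0) :=
    bracketEq_Pc_iff.1 (h₁ ▸ C.sp_brkt (-1) 1)
  have hHE : C.ConstBracket (C.bas 0) (C.bas 1) (c • C.bas 1) :=
    bracketEq_Pc_iff.1 (h₀ ▸ C.sp_brkt 0 1)
  have hHH : C.ConstBracket (C.bas 0) (C.bas 0) 0 :=
    constBracket_zero_iff.2 fun n => C.abelian0 n _ (C.bas_mem 0) _ (C.bas_mem 0)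
  have hEF : ¬C.ConstBracket (C.bas 1) (C.bas (-1)) 0 := fun h =>
    smul_ne_zero hd (bas_ne_zero C.supp_zero) (neg_eq_zero.1 (hFE.symm.1.symm.trans h.1))
  have hFH : C.ConstBracket (C.bas (-1)) (C.bas 0) (c • C.bas (-1)) := by
    refine hFE.of_commute (by simpa using hHH.smul_left d) hHE (fun n => ?_) hEF
    rw [polySpan_bas]
    exact C.prdGrade (-1) 0 n _ (C.bas_mem _) _ (C.bas_mem _)
  exact ⟨_, _, {
    toSl2Triple := .of_rescale hc hd hFE hHE hFH hHH
    isUnit := isUnit_one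
    isGenerator_E := isGenerator_bas hG
    isGenerator_H := (isGenerator_bas C.supp_zero).smul (neg_ne_zero.2 (inv_ne_zero hc))
    isGenerator_F := (isGenerator_bas hG').smul (mul_ne_zero (inv_ne_zero hd) (inv_ne_zero hc)) }⟩

end RankOneContext

/-! ### Recognising the three algebras -/

theorem RankOneContext.linearIndependent_iterate_D {L ι : Type} [AddCommGroup L] [Module ℂ L]
    {C : RankOneContext L} {f : ι → ℤ} {v : ι → L} (hf : Function.Injective f)
    (hv : ∀ i, C.IsGenerator (f i) (v i)) :
    LinearIndependent ℂ fun q : ι × ℕ => (⇑C.D)^[q.2] (v q.1) := by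
  have span_le (i : ι) : Submodule.span ℂ (Set.range fun k => (⇑C.D)^[k] (v i)) ≤ C.G (f i) := by
    rw [Submodule.span_le]
    rintro _ ⟨k, rfl⟩
    exact Set.MapsTo.iterate (C.dGrade (f i)) k (hv i).mem
  have independent := (C.internal.submodule_iSupIndep.comp hf).mono span_le
  exact (linearIndependent_iUnion_finite (fun i => (hv i).linearIndependent)
    fun i s _ hi => independent.disjoint_biSup hi).comp _
      (Equiv.sigmaEquivProd ι ℕ).symm.injective

theorem LieConformalAlgebra.isCur_of_basis {L g ι : Type} [AddCommGroup L] [Module ℂ L]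
    [LieRing g] [LieAlgebra ℂ g] {C : LieConformalAlgebra L} (B : Module.Basis ι ℂ g)
    {φ : g →ₗ[ℂ] L} (hfree : C.IsFreePolyBasis (φ ∘ B))
    (hφ : ∀ i j, C.ConstBracket (φ (B i)) (φ (B j)) (φ ⁅B i, B j⁆)) : C.IsCur g := by
  refine ⟨φ, ?_, fun x y => ?_, fun n hn x y => ?_⟩
  · let Φ : (ℕ →₀ g) ≃ₗ[ℂ] L := (Finsupp.basis fun _ : ℕ => B).equiv
      (Module.Basis.mk hfree.1 hfree.2.ge)
      ((Equiv.sigmaEquivProd ℕ ι).trans (Equiv.prodComm ℕ ι))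
    have hΦ : Φ = Finsupp.lsum ℂ fun k : ℕ => (C.D ^ k) ∘ₗ φ := by
      refine (Finsupp.basis fun _ : ℕ => B).ext ?_
      rintro ⟨k, i⟩
      rw [LinearEquiv.coe_coe, Module.Basis.equiv_apply]
      simp [Module.End.pow_apply]
    convert Φ.bijective using 1
    funext f
    rw [← Φ.coe_coe, hΦ, Finsupp.lsum_apply]
    exact Finsupp.sum_congr fun k _ => (Module.End.pow_apply C.D k _).symm
  · have prd_eq : (C.prd 0).compl₁₂ φ φ = (LieModule.toEnd ℂ g g : g →ₗ[ℂ] g →ₗ[ℂ] g).compr₂ φ :=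
      LinearMap.ext_basis B B fun i j => (hφ i j).1
    exact LinearMap.congr_fun₂ prd_eq x y
  · obtain ⟨n, rfl⟩ := Nat.exists_eq_add_of_le' hn
    have prd_eq : (C.prd (n + 1)).compl₁₂ φ φ = 0 :=
      LinearMap.ext_basis B B fun i j => (hφ i j).2 n
    exact LinearMap.congr_fun₂ prd_eq x y

section Sl2

open LieAlgebra.SpecialLinear

theorem sl2_apply_one_one (A : sl (Fin 2) ℂ) : A.1 1 1 = -A.1 0 0 := by
  have trace_eq_zero : Matrix.trace A.1 = 0 := LinearMap.mem_ker.1 A.2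
  rw [Matrix.trace_fin_two] at trace_eq_zero
  linear_combination trace_eq_zero

/-- The matrices `!![0, 1; 0, 0]`, `!![-1/2, 0; 0, 1/2]`, `!![0, 0; -1/2, 0]`, normalised to satisfy
the relations of an `Sl2Triple`. -/
def sl2Basis : Module.Basis (Fin 3) ℂ (sl (Fin 2) ℂ) :=
  .ofEquivFun
    { toFun A := ![A.1 0 1, -2 * A.1 0 0, -2 * A.1 1 0]
      map_add' A B := by
        ext i; fin_cases i <;> simp [mul_add]
      map_smul' c A := by
        ext i; fin_cases i <;> simp [mul_left_comm]
      invFun x := ⟨!![-x 1 / 2, x 0; -x 2 / 2, x 1 / 2], by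
        simp [sl, Matrix.trace_fin_two, neg_div]⟩
      left_inv A := by
        ext i j; fin_cases i <;> fin_cases j <;> simp [sl2_apply_one_one, neg_div]
      right_inv x := by
        ext i; fin_cases i <;> simp <;> ring }

theorem coe_sl2Basis_zero : (sl2Basis 0).1 = !![0, 1; 0, 0] := by
  ext i j
  fin_cases i <;> fin_cases j <;> simp [sl2Basis]

theorem coe_sl2Basis_one : (sl2Basis 1).1 = !![-1 / 2, 0; 0, 1 / 2] := by
  ext i j
  fin_cases i <;> fin_cases j <;> simp [sl2Basis]

theorem coe_sl2Basis_two : (sl2Basis 2).1 = !![0, 0; -1 / 2, 0] := by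
  ext i j
  fin_cases i <;> fin_cases j <;> simp [sl2Basis]

theorem sl2Basis_lie_one_zero : ⁅sl2Basis 1, sl2Basis 0⁆ = -sl2Basis 0 := by
  ext i j
  fin_cases i <;> fin_cases j <;>
    norm_num [coe_sl2Basis_zero, coe_sl2Basis_one, Ring.lie_def]

theorem sl2Basis_lie_one_two : ⁅sl2Basis 1, sl2Basis 2⁆ = sl2Basis 2 := by
  ext i j
  fin_cases i <;> fin_cases j <;>
    norm_num [coe_sl2Basis_one, coe_sl2Basis_two, Ring.lie_def]

theorem sl2Basis_lie_two_zero : ⁅sl2Basis 2, sl2Basis 0⁆ = -sl2Basis 1 := by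
  ext i j
  fin_cases i <;> fin_cases j <;>
    norm_num [coe_sl2Basis_zero, coe_sl2Basis_one, coe_sl2Basis_two, Ring.lie_def]

end Sl2

namespace LieConformalAlgebra

variable {L : Type} [AddCommGroup L] [Module ℂ L] {C : LieConformalAlgebra L} {E H F : L}

theorem Sl2Triple.constBracket_constr_sl2Basis (t : C.Sl2Triple E H F)
    (hE : C.ConstBracket E E 0) (hF : C.ConstBracket F F 0) (i j : Fin 3) :
    C.ConstBracket (sl2Basis.constr ℂ ![E, H, F] (sl2Basis i))
      (sl2Basis.constr ℂ ![E, H, F] (sl2Basis j))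
      (sl2Basis.constr ℂ ![E, H, F] ⁅sl2Basis i, sl2Basis j⁆) := by
  set φ := sl2Basis.constr ℂ ![E, H, F] with hφ
  have φ_zero : φ (sl2Basis 0) = E := by simp [hφ]
  have φ_one : φ (sl2Basis 1) = H := by simp [hφ]
  have φ_two : φ (sl2Basis 2) = F := by simp [hφ]
  have self_eq {i : Fin 3} (h : C.ConstBracket (φ (sl2Basis i)) (φ (sl2Basis i)) 0) :
      C.ConstBracket (φ (sl2Basis i)) (φ (sl2Basis i)) (φ ⁅sl2Basis i, sl2Basis i⁆) := by
    rwa [lie_self, map_zero]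
  have hhe : C.ConstBracket (φ (sl2Basis 1)) (φ (sl2Basis 0)) (φ ⁅sl2Basis 1, sl2Basis 0⁆) := by
    rw [sl2Basis_lie_one_zero, map_neg, φ_zero, φ_one]
    exact t.HE
  have hhf : C.ConstBracket (φ (sl2Basis 1)) (φ (sl2Basis 2)) (φ ⁅sl2Basis 1, sl2Basis 2⁆) := by
    rw [sl2Basis_lie_one_two, φ_one, φ_two]
    exact t.HF
  have hfe : C.ConstBracket (φ (sl2Basis 2)) (φ (sl2Basis 0)) (φ ⁅sl2Basis 2, sl2Basis 0⁆) := by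
    rw [sl2Basis_lie_two_zero, map_neg, φ_zero, φ_one, φ_two]
    exact t.FE
  have swap {x y} (h : C.ConstBracket (φ x) (φ y) (φ ⁅x, y⁆)) :
      C.ConstBracket (φ y) (φ x) (φ ⁅y, x⁆) := by
    rw [← lie_skew, map_neg]
    exact h.symm
  fin_cases i <;> fin_cases j
  exacts [self_eq (φ_zero.symm ▸ hE), swap hhe, swap hfe, hhe, self_eq (φ_one.symm ▸ t.HH), hhf,
    hfe, swap hhf, self_eq (φ_two.symm ▸ hF)]

end LieConformalAlgebra

namespace ClassV

open LieConformalAlgebra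

variable {L ι : Type} [AddCommGroup L] [Module ℂ L] {C : ClassV L} {ε : ℤ} {E H F : L}
  {w w' : ℕ → L} {f : ι → ℤ}

theorem isFreePolyBasis_of_isGenerator {v : ι → L} (hf : Function.Injective f)
    (hv : ∀ i, C.IsGenerator (f i) (v i)) (h1 : 1 ∈ Set.range f) (h0 : 0 ∈ Set.range f)
    (hneg : -1 ∈ Set.range f)
    (hmul : ∀ i j n, C.prd n (v i) (v j) ∈ C.polySpan (Set.range v)) : C.IsFreePolyBasis v := by
  refine ⟨RankOneContext.linearIndependent_iterate_D hf hv, ?_⟩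
  have G_le {j : ℤ} (hj : j ∈ Set.range f) : C.G j ≤ C.polySpan (Set.range v) := by
    obtain ⟨i, rfl⟩ := hj
    refine (hv i).G_le_polySpan.trans (polySpan_le (fun _ => D_mem_polySpan) ?_)
    exact Set.singleton_subset_iff.2 (C.subset_polySpan _ ⟨i, rfl⟩)
  rw [← C.polySpan_range]
  refine C.genV _ (fun _ => D_mem_polySpan) (fun n x hx y hy => ?_) (G_le h1) (G_le h0) (G_le hneg)
  refine prd_mem_of_mem_polySpan (fun _ => D_mem_polySpan) (fun n => ?_) hx hy n
  rintro _ ⟨i, rfl⟩ _ ⟨j, rfl⟩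
  exact hmul i j n

theorem isFreePolyBasis_gradedFamily (t : C.GradedTriple ε E H F) (T : C.IsTail E H F w)
    (T' : C.IsTail F (-H) E w') (hf : Function.Injective f)
    (hgen : ∀ i, C.IsGenerator (ε * f i) (gradedFamily E H F w w' (f i)))
    (hzero : ∀ j ∉ Set.range f, gradedFamily E H F w w' j = 0) :
    C.IsFreePolyBasis fun i => gradedFamily E H F w w' (f i) := by
  have mem_range {j : ℤ} {x : L} (hj : gradedFamily E H F w w' j = x) (hx : x ≠ 0) :
      ε * j ∈ Set.range fun i => ε * f i := by
    obtain ⟨i, rfl⟩ := not_not.1 (mt (hzero j) (hj.trans_ne hx))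
    exact ⟨i, rfl⟩
  have hE := mem_range gradedFamily_one t.isGenerator_E.1
  have hH := mem_range gradedFamily_zero t.isGenerator_H.1
  have hF := mem_range gradedFamily_neg_one t.isGenerator_F.1
  have hinj : Function.Injective fun i => ε * f i := t.isUnit.mul_right_injective.comp hf
  have hmul (i j : ι) (n : ℕ) := (t.bracketEq_gradedFamily T T' (f i) (f j)).prd_mem
    (N := C.polySpan (Set.range fun i => gradedFamily E H F w w' (f i)))
    (fun _ => D_mem_polySpan) (by
      by_cases hij : f i + f j ∈ Set.range f
      · obtain ⟨k, hk⟩ := hij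
        exact C.subset_polySpan _ ⟨k, congrArg _ hk⟩
      · rw [hzero _ hij]
        exact zero_mem _) n
  obtain rfl | rfl := Int.isUnit_iff.1 t.isUnit
  · exact isFreePolyBasis_of_isGenerator hinj hgen hE hH hF hmul
  · exact isFreePolyBasis_of_isGenerator hinj hgen hF hH hE hmul

theorem isM2 (t : C.GradedTriple ε E H F) (h : C.sp ε ε ≠ 0) (h' : C.sp (-ε) (-ε) ≠ 0) :
    C.IsM2 := by
  obtain ⟨w, T, hw⟩ := t.exists_isTail h
  obtain ⟨w', T', hw'⟩ := t.flip.exists_isTail h'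
  exact ⟨gradedFamily E H F w w', isFreePolyBasis_gradedFamily t T T' Function.injective_id
    (fun _ => t.isGenerator_gradedFamily (fun _ => hw) fun _ => hw') (by simp),
    t.bracketEq_gradedFamily T T'⟩

theorem isM1 (t : C.GradedTriple ε E H F) (h : C.sp ε ε ≠ 0) (h' : C.sp (-ε) (-ε) = 0) :
    C.IsM1 := by
  obtain ⟨w, T, hw⟩ := t.exists_isTail h
  have T' := t.flip.isTail_zero h'
  have eq_zero {j : ℤ} (hj : j < -1) : gradedFamily E H F w 0 j = 0 := by
    obtain ⟨k, rfl⟩ : ∃ k : ℕ, j = -(k + 2) := ⟨(-j - 2).toNat, by lia⟩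
    rw [gradedFamily_neg_natCast_add_two, Pi.zero_apply]
  refine ⟨gradedFamily E H F w 0, isFreePolyBasis_gradedFamily t T T' Subtype.val_injective
    (fun i => t.isGenerator_gradedFamily (fun _ => hw) fun hi => by have := i.2; lia)
    (fun j hj => eq_zero (by simpa using hj)), fun i j hi hj => ?_⟩
  have hij : (if -1 ≤ i + j then gradedFamily E H F w 0 (i + j) else 0) =
      gradedFamily E H F w 0 (i + j) := by
    split_ifs with hij
    · rfl
    · rw [eq_zero (by lia)]
  rw [hij]
  have table := t.bracketEq_gradedFamily T T' i j
  by_cases hneg : i = -1 ∧ j = -1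
  · obtain ⟨rfl, rfl⟩ := hneg
    rw [eq_zero (j := -1 + -1) (by lia), bracketEq_zero_right_iff] at table ⊢
    exact table
  · rwa [pM1_eq_pM2 hi hj (by tauto)]

theorem isCurSl2 (t : C.GradedTriple ε E H F) (h : C.sp ε ε = 0) (h' : C.sp (-ε) (-ε) = 0) :
    C.IsCurSl2 := by
  have hfree := isFreePolyBasis_gradedFamily (f := (![1, 0, -1] : Fin 3 → ℤ)) t
    (t.isTail_zero h) (t.flip.isTail_zero h') (by decide)
    (fun i => t.isGenerator_gradedFamily
      (fun hi => absurd hi (by fin_cases i <;> decide))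
      (fun hi => absurd hi (by fin_cases i <;> decide))) fun j hj => ?_
  · refine isCur_of_basis sl2Basis (φ := sl2Basis.constr ℂ ![E, H, F]) ?_
      (t.constBracket_constr_sl2Basis (bracketEq_zero_right_iff.1 (t.isTail_zero h).EE)
        (bracketEq_zero_right_iff.1 (t.flip.isTail_zero h').EE))
    convert hfree using 1
    funext i
    fin_cases i <;> simp [gradedFamily_one, gradedFamily_zero, gradedFamily_neg_one]
  · obtain ⟨k, rfl | rfl⟩ := exists_eq_of_two_le_abs (i := j) (by
      by_contra! hlt
      obtain rfl | rfl | rfl := eq_of_abs_lt_two hlt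
      exacts [hj ⟨2, rfl⟩, hj ⟨1, rfl⟩, hj ⟨0, rfl⟩])
    · rw [gradedFamily_natCast_add_two, Pi.zero_apply]
    · rw [gradedFamily_neg_natCast_add_two, Pi.zero_apply]

end ClassV

/-- if `p_{-1,1}, p_{0,1} ∈ ℂ*`, then `L ≅ Cur sl(2,ℂ)` if
`p_{1,1} = p_{-1,-1} = 0`; `L ≅ M(2)` if both are nonzero; and `L ≅ M(1)`
if exactly one of them is nonzero. -/
theorem classV_constant_case_classification
    {L : Type} [AddCommGroup L] [Module ℂ L] (C : ClassV L)
    (h₁ : ∃ a : ℂ, a ≠ 0 ∧ C.sp (-1) 1 = Pc a)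
    (h₀ : ∃ a : ℂ, a ≠ 0 ∧ C.sp 0 1 = Pc a) :
    (C.sp 1 1 = 0 → C.sp (-1) (-1) = 0 → C.toLieConformalAlgebra.IsCurSl2) ∧
    (C.sp 1 1 ≠ 0 → C.sp (-1) (-1) ≠ 0 → C.toLieConformalAlgebra.IsM2) ∧
    ((C.sp 1 1 = 0 ↔ C.sp (-1) (-1) ≠ 0) → C.toLieConformalAlgebra.IsM1) := by
  obtain ⟨H, F, t⟩ := C.exists_gradedTriple C.supp_one C.supp_negone h₁ h₀
  refine ⟨ClassV.isCurSl2 t, ClassV.isM2 t, fun h => ?_⟩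
  by_cases h_one : C.sp 1 1 = 0
  · exact ClassV.isM1 t.flip (h.1 h_one) (by rwa [neg_neg])
  · exact ClassV.isM1 t h_one (not_not.1 (mt h.2 h_one))
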